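/- arXiv:1512.01186 — 2 statements merged into one kernel-verified Lean document; each statement's English description precedes it below -/
import Mathlib

section
/- Let s be a complex number with 0 < Re(s) < 1. Then π^{-s/2}·Γ(s/2)·ζ(s) = 2^{s/2}·Γ(s/2)·e^{-iπ(1-s)/4}·∫_{-1/2 ↘ 1/2} (e^{-iπu² + iπu}/(2i·cos(πu)))·(1/Γ(s))·(∫_0^∞ e^{-w²/2 - √(2π)·e^{iπ/4}·u·w}·w^{s-1} dw) du + 2^{(1-s)/2}·Γ((1-s)/2)·e^{iπs/4}·∫_{-1/2 ↙ 1/2} (e^{iπu² - iπu}/(2i·cos(πu)))·(1/Γ(1-s))·(∫_0^∞ e^{-w²/2 - √(2π)·e^{-iπ/4}·u·w}·w^{-s} dw) du. (Here the parabolic cylinder functions U(s-1/2, √(2π)e^{iπ/4}u) and U(1/2-s, √(2π)e^{-iπ/4}u) appearing in the Riemann–Siegel integral formula have been written via their real integral representations, which is valid since Re(s-1/2) > -1/2 and Re(1/2-s) > -1/2.) -/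
open scoped Real
open MeasureTheory Set Complex

/-- Integral along the straight line `t ↦ c + e^{iθ} t`, `t ∈ ℝ`. -/
noncomputable def lineInt (c θ : ℝ) (f : ℂ → ℂ) : ℂ :=
  ∫ t : ℝ, f ((c : ℂ) + Complex.exp ((θ : ℂ) * Complex.I) * (t : ℂ)) *
    Complex.exp ((θ : ℂ) * Complex.I)

/-!
With `ω = e^{iπ/4}` and `K y = e^{-πy²} / (2 sinh(πωy))`, the substitution `u = 1/2 + ω⁻¹ y` turns
the first line of integration into a horizontal line `Im y = η` just below the real axis, and
exchanging the integrals produces the Mellin transform of a Mordell integral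
`M ρ = ∫ e^{-2πρy} K y dy`. Since `K (y + ω) = e^{-2πωy} K y`, shifting the line by `ω` and back across the pole at `0`
gives two linear equations that determine `M`. For `x > 0`, both `M x`, after multiplication by a
Gaussian, and `M (ix)` are elementary: up to the constant `-ω` they are `φ x` and its conjugate,
where `φ x = 1 / (e^{2πωx} - 1) - K x`. So the first line integral is, up to elementary factors,
the Mellin transform of `φ` at `s`; complex conjugation reduces the second one to that of the
conjugate of `φ` at `1 - s`.

The two transforms are related to `ζ` by splitting `φ`. The term `1 / (e^{2πωx} - 1)` contributes
`(2πω)^{-s} Γ(s) ζ(s)`. For `Re s > 2`, the Mellin transform of `K` at `s`, multiplied by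
`-2i cos(πs/2)`, is the integral of `(iy)^{s-1} K y` over the real line, which may be moved to
`Im y = η` and is then entire in `s`. Inserting `M (ix)` into the Mellin transform of the conjugate of `φ`
at `1 - s` gives the same integral, so by analytic continuation the resulting linear relation
between the two transforms and `ζ(s)` holds in the critical strip. The functional equation of the
Gamma factor puts it into the symmetric form of the formula.
-/

namespace RiemannSiegel

open Filter Topology

lemma integrable_exp_neg_mul_abs {δ : ℝ} (hδ : 0 < δ) :
    Integrable (fun x : ℝ => Real.exp (-δ * |x|)) := by
  rw [← integrableOn_univ, ← Iic_union_Ioi (a := (0 : ℝ))]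
  refine IntegrableOn.union ?_ ?_
  · exact (integrableOn_exp_mul_Iic hδ 0).congr_fun
      (fun x hx => by simp [abs_of_nonpos (mem_Iic.mp hx)]) measurableSet_Iic
  · exact (integrableOn_exp_mul_Ioi (neg_lt_zero.mpr hδ) 0).congr_fun
      (fun x hx => by simp [abs_of_pos (mem_Ioi.mp hx)]) measurableSet_Ioi

section HorizontalLines

variable {f : ℂ → ℂ} {α β C δ : ℝ}

lemma integrable_horizontal (hδ : 0 < δ) (hf : ContinuousOn f {z | z.im = α})
    (hC : ∀ z : ℂ, z.im = α → ‖f z‖ ≤ C * Real.exp (-δ * |z.re|)) :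
    Integrable fun t : ℝ => f (t + α * I) :=
  ((integrable_exp_neg_mul_abs hδ).const_mul C).mono'
    (hf.comp_continuous (by fun_prop) fun t => by simp).aestronglyMeasurable
    (Eventually.of_forall fun t => by simpa using hC (t + α * I) (by simp))

lemma tendsto_vertical_integral_zero (hδ : 0 < δ)
    (hC : ∀ z : ℂ, z.im ∈ uIcc α β → ‖f z‖ ≤ C * Real.exp (-δ * |z.re|)) {l : Filter ℝ}
    (hl : Tendsto (fun x : ℝ => |x|) l atTop) :
    Tendsto (fun x : ℝ => ∫ y in α..β, f (x + y * I)) l (𝓝 0) := by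
  have hbound (x : ℝ) :
      ‖∫ y in α..β, f (x + y * I)‖ ≤ C * Real.exp (-δ * |x|) * |β - α| :=
    intervalIntegral.norm_integral_le_of_norm_le_const fun y hy => by
      simpa using hC (x + y * I) (by simpa using uIoc_subset_uIcc hy)
  refine squeeze_zero_norm hbound ?_
  have hexp : Tendsto (fun x : ℝ => Real.exp (-δ * |x|)) l (𝓝 0) :=
    Real.tendsto_exp_atBot.comp (hl.const_mul_atTop_of_neg (neg_lt_zero.mpr hδ))
  simpa using (hexp.const_mul C).mul_const |β - α|

theorem integral_horizontal_eq_of_norm_le_exp (hδ : 0 < δ)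
    (hc : ContinuousOn f {z | z.im ∈ uIcc α β})
    (hd : DifferentiableOn ℂ f {z | z.im ∈ Ioo (min α β) (max α β)})
    (hC : ∀ z : ℂ, z.im ∈ uIcc α β → ‖f z‖ ≤ C * Real.exp (-δ * |z.re|)) :
    ∫ t : ℝ, f (t + α * I) = ∫ t : ℝ, f (t + β * I) := by
  have hint (γ : ℝ) (hγ : γ ∈ uIcc α β) :
      Tendsto (fun T : ℝ => ∫ x in (-T)..T, f (x + γ * I)) atTop (𝓝 (∫ t : ℝ, f (t + γ * I))) :=
    intervalIntegral_tendsto_integral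
      (integrable_horizontal hδ (hc.mono fun z hz => by simpa [hz.symm] using hγ)
        fun z hz => hC z (hz ▸ hγ)) tendsto_neg_atTop_atBot tendsto_id
  have hrect (T : ℝ) :
      (∫ x in (-T)..T, f (x + α * I)) - (∫ x in (-T)..T, f (x + β * I)) =
        I * (∫ y in α..β, f ((-T : ℝ) + y * I)) - I * ∫ y in α..β, f (T + y * I) := by
    have := integral_boundary_rect_eq_zero_of_continuousOn_of_differentiableOn f
      (-T + α * I) (T + β * I) (hc.mono fun z hz => by simpa using hz.2)
      (hd.mono fun z hz => by simpa using hz.2)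
    simp only [add_re, neg_re, ofReal_re, mul_re, I_re, mul_zero, ofReal_im, I_im, mul_one,
      sub_self, add_zero, add_im, neg_im, neg_zero, mul_im, zero_add, smul_eq_mul,
      ofReal_neg] at this ⊢
    linear_combination this
  have hvert := (((tendsto_vertical_integral_zero hδ hC tendsto_abs_atBot_atTop).comp
    tendsto_neg_atTop_atBot).const_mul I).sub
    ((tendsto_vertical_integral_zero hδ hC tendsto_abs_atTop_atTop).const_mul I)
  have hdiff := (hint α left_mem_uIcc).sub (hint β right_mem_uIcc)
  simp only [hrect] at hdiff
  simpa [sub_eq_zero] using tendsto_nhds_unique hdiff hvert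

end HorizontalLines

theorem differentiableOn_integral_of_locally_dominated {α E : Type*} [MeasurableSpace α]
    {μ : Measure α} [NormedAddCommGroup E] [NormedSpace ℂ E] {F : ℂ → α → E} {U : Set ℂ}
    (hU : IsOpen U) (hm : ∀ z ∈ U, AEStronglyMeasurable (F z) μ)
    (hd : ∀ᵐ a ∂μ, DifferentiableOn ℂ (F · a) U)
    (hb : ∀ z₀ ∈ U, ∃ V ∈ 𝓝 z₀, ∃ b : α → ℝ, Integrable b μ ∧
      ∀ᵐ a ∂μ, ∀ z ∈ V, ‖F z a‖ ≤ b a) :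
    DifferentiableOn ℂ (fun z => ∫ a, F z a ∂μ) U := by
  intro z₀ hz₀
  obtain ⟨V, hV, b, hbint, hle⟩ := hb z₀ hz₀
  obtain ⟨R, hR, hball⟩ := Metric.mem_nhds_iff.mp (inter_mem (hU.mem_nhds hz₀) hV)
  have hsub {z : ℂ} (hz : z ∈ Metric.ball z₀ (R / 2)) : Metric.closedBall z (R / 3) ⊆ U ∩ V :=
    (Metric.closedBall_subset_ball' (by rw [Metric.mem_ball] at hz; linarith)).trans hball
  have hderiv : ∀ᵐ a ∂μ, ∀ z ∈ Metric.ball z₀ (R / 2), HasDerivAt (F · a) (deriv (F · a) z) z := by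
    filter_upwards [hd] with a ha z hz
    have hzU := (hsub hz (Metric.mem_closedBall_self (by positivity))).1
    exact (ha.differentiableAt (hU.mem_nhds hzU)).hasDerivAt
  have hcauchy : ∀ᵐ a ∂μ, ∀ z ∈ Metric.ball z₀ (R / 2), ‖deriv (F · a) z‖ ≤ b a / (R / 3) := by
    filter_upwards [hd, hle] with a ha hba z hz
    refine norm_deriv_le_of_forall_mem_sphere_norm_le (by positivity) ?_
      fun w hw => hba w (hsub hz (Metric.sphere_subset_closedBall hw)).2
    exact DifferentiableOn.diffContOnCl
      (ha.mono (Metric.closure_ball_subset_closedBall.trans ((hsub hz).trans inter_subset_left)))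
  have hz₀mem : z₀ ∈ Metric.ball z₀ (R / 2) := Metric.mem_ball_self (by positivity)
  have hmeas : AEStronglyMeasurable (fun a => deriv (F · a) z₀) μ := by
    obtain ⟨w, hw, hwU⟩ := exists_seq_forall_of_frequently
      (eventually_nhdsWithin_of_eventually_nhds (s := {z₀}ᶜ) (hU.mem_nhds hz₀)).frequently
    refine aestronglyMeasurable_of_tendsto_ae atTop
      (f := fun n a => slope (F · a) z₀ (w n)) (fun n => ?_) ?_
    · exact ((hm _ (hwU n)).sub (hm _ hz₀)).const_smul _
    · filter_upwards [hderiv] with a ha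
      exact (hasDerivAt_iff_tendsto_slope.mp (ha z₀ hz₀mem)).comp hw
  have hint : Integrable (F z₀) μ :=
    hbint.mono' (hm z₀ hz₀) (hle.mono fun a ha => ha z₀ (mem_of_mem_nhds hV))
  have := hasDerivAt_integral_of_dominated_loc_of_deriv_le
    (Metric.ball_mem_nhds z₀ (by positivity : 0 < R / 2))
    (eventually_of_mem (hU.mem_nhds hz₀) hm) hint hmeas hcauchy (hbint.div_const _) hderiv
  exact this.2.differentiableAt.differentiableWithinAt

section Mellin

lemma ofReal_mul_cpow {a : ℝ} (ha : 0 < a) {z : ℂ} (hz : z ≠ 0) (s : ℂ) :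
    (a * z : ℂ) ^ s = (a : ℂ) ^ s * z ^ s := by
  have ha' : (a : ℂ) ≠ 0 := ofReal_ne_zero.mpr ha.ne'
  rw [cpow_def_of_ne_zero (mul_ne_zero ha' hz), cpow_def_of_ne_zero ha', cpow_def_of_ne_zero hz,
    log_ofReal_mul ha hz, ofReal_log ha.le, add_mul, exp_add]

lemma continuousOn_ofReal_cpow_Ioi (s : ℂ) : ContinuousOn (fun x : ℝ => (x : ℂ) ^ s) (Ioi 0) :=
  continuous_ofReal.continuousOn.cpow_const fun _ hx => ofReal_mem_slitPlane.mpr hx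

theorem mellin_integral_comm {F : ℝ → ℝ → ℂ} {b : ℝ → ℝ} {ε : ℝ} {s : ℂ}
    (hF : ContinuousOn (Function.uncurry F) (Ioi 0 ×ˢ univ)) (hb : Integrable b) (hε : 0 < ε)
    (hle : ∀ x > 0, ∀ t, ‖F x t‖ ≤ Real.exp (-ε * x) * b t) (hs : 0 < s.re) :
    mellin (fun x => ∫ t, F x t) s = ∫ t, mellin (F · t) s := by
  have hpow : Integrable (fun x : ℝ => x ^ (s.re - 1) * Real.exp (-ε * x))
      (volume.restrict (Ioi 0)) := by
    simpa [IntegrableOn] using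
      integrableOn_rpow_mul_exp_neg_mul_rpow (s := s.re - 1) (by linarith) one_pos hε
  have hprod : (volume.restrict (Ioi (0 : ℝ))).prod (volume : Measure ℝ) =
      (volume.prod volume).restrict (Ioi 0 ×ˢ univ) := by
    rw [← Measure.prod_restrict, Measure.restrict_univ]
  have hcont : ContinuousOn (fun p : ℝ × ℝ => (p.1 : ℂ) ^ (s - 1) * F p.1 p.2) (Ioi 0 ×ˢ univ) :=
    ((continuousOn_ofReal_cpow_Ioi _).comp continuousOn_fst fun p hp => hp.1).mul hF
  simp only [mellin, smul_eq_mul, ← integral_const_mul]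
  refine integral_integral_swap ((hpow.mul_prod hb).mono' ?_ ?_)
  · rw [hprod]
    exact hcont.aestronglyMeasurable (measurableSet_Ioi.prod MeasurableSet.univ)
  · rw [hprod]
    refine (ae_restrict_mem (measurableSet_Ioi.prod MeasurableSet.univ)).mono fun p hp => ?_
    have hp : 0 < p.1 := hp.1
    rw [Function.uncurry_apply_pair, norm_mul, norm_cpow_eq_rpow_re_of_pos hp, sub_re, one_re,
      mul_assoc]
    exact mul_le_mul_of_nonneg_left (hle _ hp _) (by positivity)

lemma integrableOn_rpow_mul_comp_mul_left {b : ℝ → ℝ} {σ ρ : ℝ} (hρ : 0 < ρ)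
    (hb : IntegrableOn (fun x : ℝ => x ^ σ * b x) (Ioi 0)) :
    IntegrableOn (fun x : ℝ => x ^ σ * b (ρ * x)) (Ioi 0) := by
  rw [← mul_zero ρ, ← integrableOn_Ioi_comp_mul_left_iff _ _ hρ] at hb
  refine IntegrableOn.congr_fun (hb.const_mul (ρ ^ σ)⁻¹) (fun x hx => ?_) measurableSet_Ioi
  have := Real.rpow_pos_of_pos hρ σ
  simp only [Real.mul_rpow hρ.le (mem_Ioi.mp hx).le]
  field_simp

section ComplexScaling

variable {f : ℂ → ℂ} {b : ℝ → ℝ} {s : ℂ} (hf : DifferentiableOn ℂ f {z | 0 < z.re})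
  (hb : AntitoneOn b (Ioi 0)) (hle : ∀ z : ℂ, 0 < z.re → ‖f z‖ ≤ b z.re)
  (hint : IntegrableOn (fun x : ℝ => x ^ (s.re - 1) * b x) (Ioi 0))
include hf hb hle hint

lemma differentiableOn_mellin_comp_mul_left :
    DifferentiableOn ℂ (fun r => mellin (fun x : ℝ => f (r * x)) s) {r | 0 < r.re} := by
  have hopen (ρ : ℝ) : IsOpen {r : ℂ | ρ < r.re} := isOpen_lt continuous_const continuous_re
  have hre {r : ℂ} (hr : 0 < r.re) {x : ℝ} (hx : 0 < x) : 0 < (r * x).re := by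
    simpa using mul_pos hr hx
  refine differentiableOn_integral_of_locally_dominated (hopen 0) (fun r hr => ?_) ?_
    fun r (hr : 0 < r.re) => ?_
  · refine ContinuousOn.aestronglyMeasurable ?_ measurableSet_Ioi
    exact (continuousOn_ofReal_cpow_Ioi _).smul (hf.continuousOn.comp (by fun_prop)
      fun x hx => hre hr hx)
  · refine (ae_restrict_mem measurableSet_Ioi).mono fun x hx => ?_
    exact (hf.comp (by fun_prop) fun r hr => hre hr hx).const_smul ((x : ℂ) ^ (s - 1))
  · set ρ := r.re / 2
    have hρ : 0 < ρ := half_pos hr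
    refine ⟨{w | ρ < w.re}, (hopen ρ).mem_nhds (half_lt_self hr : ρ < r.re), _,
      integrableOn_rpow_mul_comp_mul_left hρ hint, ?_⟩
    refine (ae_restrict_mem measurableSet_Ioi).mono fun x (hx : 0 < x) w (hw : ρ < w.re) => ?_
    rw [norm_smul, norm_cpow_eq_rpow_re_of_pos hx, sub_re, one_re]
    refine mul_le_mul_of_nonneg_left ((hle _ (hre (hρ.trans hw) hx)).trans ?_) (by positivity)
    exact hb (mul_pos hρ hx) (hre (hρ.trans hw) hx)
      (by simpa using mul_le_mul_of_nonneg_right hw.le hx.le)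

/- Both sides are holomorphic in `r` and agree for real `r > 0`, so no ray has to be rotated. -/
theorem mellin_comp_mul_left_of_re_pos {r : ℂ} (hr : 0 < r.re) :
    mellin (fun x : ℝ => f (r * x)) s = r ^ (-s) * mellin (fun x : ℝ => f x) s := by
  have hopen : IsOpen {z : ℂ | 0 < z.re} := isOpen_lt continuous_const continuous_re
  have hright : DifferentiableOn ℂ (fun r => r ^ (-s) * mellin (fun x : ℝ => f x) s)
      {r | 0 < r.re} := fun r hr =>
    ((differentiableAt_id.cpow_const (Or.inl hr)).mul_const _).differentiableWithinAt
  have hreal (a : ℝ) (ha : 0 < a) :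
      mellin (fun x : ℝ => f (a * x)) s = (a : ℂ) ^ (-s) * mellin (fun x : ℝ => f x) s := by
    simpa using mellin_comp_mul_left (fun x : ℝ => f x) s ha
  have htendsto : Tendsto ((↑) : ℝ → ℂ) (𝓝[>] 1) (𝓝[≠] 1) :=
    tendsto_nhdsWithin_of_tendsto_nhds_of_eventually_within _
      ((continuous_ofReal.tendsto' 1 1 ofReal_one).mono_left nhdsWithin_le_nhds)
      (eventually_mem_nhdsWithin.mono fun x hx => by simpa using (mem_Ioi.mp hx).ne')
  refine ((differentiableOn_mellin_comp_mul_left hf hb hle hint).analyticOnNhd hopen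
    ).eqOn_of_preconnected_of_frequently_eq (hright.analyticOnNhd hopen)
    (convex_halfSpace_re_gt 0).isPreconnected (by simp) (z₀ := 1) ?_ hr
  exact htendsto.frequently (Eventually.frequently (eventually_mem_nhdsWithin.mono
    fun x (hx : x ∈ Ioi (1 : ℝ)) => hreal x (one_pos.trans hx)))

end ComplexScaling

theorem mellin_cexp_neg_mul {r s : ℂ} (hr : 0 < r.re) (hs : 0 < s.re) :
    mellin (fun x : ℝ => cexp (-(r * x))) s = r ^ (-s) * Gamma s := by
  have h := mellin_comp_mul_left_of_re_pos (f := fun z => cexp (-z)) (b := fun x => Real.exp (-x))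
    (s := s) (by fun_prop) (fun x _ y _ hxy => Real.exp_le_exp.mpr (neg_le_neg hxy))
    (fun z _ => by simp [norm_exp])
    (by simpa [mul_comm] using Real.GammaIntegral_convergent hs) hr
  simpa [Gamma_eq_integral hs, mellin, GammaIntegral, mul_comm] using h

lemma mul_exp_half_le_exp_sub_one {x : ℝ} (hx : 0 ≤ x) :
    x * Real.exp (x / 2) ≤ Real.exp x - 1 := by
  have hsinh : x / 2 ≤ Real.sinh (x / 2) := Real.self_le_sinh_iff.mpr (by positivity)
  have hsq : Real.exp (x / 2) * Real.exp (x / 2) = Real.exp x := by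
    rw [← Real.exp_add, add_halves]
  have hinv : Real.exp (-(x / 2)) * Real.exp (x / 2) = 1 := by
    rw [← Real.exp_add, neg_add_cancel, Real.exp_zero]
  rw [Real.sinh_eq] at hsinh
  nlinarith [mul_le_mul_of_nonneg_right hsinh (Real.exp_pos (x / 2)).le]

lemma mellin_inv_exp_sub_one {s : ℂ} (hs : 1 < s.re) :
    mellin (fun x : ℝ => (cexp x - 1)⁻¹) s = Gamma s * riemannZeta s := by
  have hgeom (x : ℝ) (hx : x ∈ Ioi (0 : ℝ)) :
      HasSum (fun n : ℕ => (1 : ℂ) * Real.exp (-((n : ℝ) + 1) * x)) (cexp x - 1)⁻¹ := by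
    have hlt : ‖cexp (-x)‖ < 1 := by simpa [norm_exp] using hx
    convert! (hasSum_geometric_of_norm_lt_one hlt).mul_left (cexp (-x)) using 1
    · ext n
      push_cast
      rw [← exp_nat_mul, ← exp_add]
      ring_nf
    · have hfactor : cexp x - 1 = cexp x * (1 - cexp (-x)) := by simp [mul_sub, ← exp_add]
      rw [hfactor, mul_inv, ← exp_neg]
  have hsum := hasSum_mellin (fun n => Or.inr n.cast_add_one_pos) (one_pos.trans hs) hgeom
    (by simpa using (summable_nat_add_iff 1).mpr (Real.summable_nat_rpow_inv.mpr hs))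
  rw [← hsum.tsum_eq, zeta_eq_tsum_one_div_nat_add_one_cpow hs, ← tsum_mul_left]
  simp [div_eq_mul_inv]

theorem mellin_inv_cexp_mul_sub_one {r s : ℂ} (hr : 0 < r.re) (hs : 1 < s.re) :
    mellin (fun x : ℝ => (cexp (r * x) - 1)⁻¹) s = r ^ (-s) * (Gamma s * riemannZeta s) := by
  have hlower {z : ℂ} (hz : 0 < z.re) : z.re * Real.exp (z.re / 2) ≤ ‖cexp z - 1‖ :=
    (mul_exp_half_le_exp_sub_one hz.le).trans <| by
      simpa [norm_exp] using norm_sub_norm_le (cexp z) 1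
  have hpos {x : ℝ} (hx : 0 < x) : 0 < x * Real.exp (x / 2) := by positivity
  rw [← mellin_inv_exp_sub_one hs]
  refine mellin_comp_mul_left_of_re_pos (f := fun z => (cexp z - 1)⁻¹)
    (b := fun x => (x * Real.exp (x / 2))⁻¹) ?_ ?_ ?_ ?_ hr
  · exact DifferentiableOn.inv (by fun_prop) fun z hz =>
      norm_pos_iff.mp ((hpos hz).trans_le (hlower hz))
  · intro x hx y hy hxy
    have hy : 0 ≤ y := (mem_Ioi.mp hy).le
    exact inv_anti₀ (hpos hx) (by gcongr)
  · intro z hz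
    rw [norm_inv]
    exact inv_anti₀ (hpos hz) (hlower hz)
  · refine (integrableOn_rpow_mul_exp_neg_mul_rpow (s := s.re - 2) (by linarith) one_pos
      one_half_pos).congr_fun (fun x hx => ?_) measurableSet_Ioi
    have hx : 0 < x := hx
    have hsplit : x ^ (s.re - 1) = x ^ (s.re - 2) * x := by
      rw [← Real.rpow_add_one hx.ne']
      ring_nf
    simp only [hsplit, Real.rpow_one, mul_inv, ← Real.exp_neg]
    field_simp

end Mellin

/-- The primitive eighth root of unity `e^{iπ/4}`; both lines of integration have direction
`ω⁻¹` or `-ω`. -/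
noncomputable def ω : ℂ := cexp (π * I / 4)

lemma ω_eq_exp : ω = cexp (((π / 4 : ℝ) : ℂ) * I) := by
  rw [ω]; push_cast; ring_nf

lemma re_ω : ω.re = √2 / 2 := by rw [ω_eq_exp, exp_ofReal_mul_I_re, Real.cos_pi_div_four]

lemma im_ω : ω.im = √2 / 2 := by rw [ω_eq_exp, exp_ofReal_mul_I_im, Real.sin_pi_div_four]

lemma norm_ω : ‖ω‖ = 1 := by rw [ω_eq_exp, norm_exp_ofReal_mul_I]

lemma ω_eq_add_mul_I : ω = (√2 / 2 : ℝ) + (√2 / 2 : ℝ) * I := by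
  simpa only [re_ω, im_ω] using (re_add_im ω).symm

lemma ω_ne_zero : ω ≠ 0 := exp_ne_zero _

lemma sq_ω : ω ^ 2 = I := by
  have hdouble : ((2 : ℕ) : ℂ) * (π * I / 4) = π / 2 * I := by push_cast; ring
  rw [ω, ← exp_nat_mul, hdouble, exp_pi_div_two_mul_I]

lemma conj_ω : (starRingEnd ℂ) ω = ω⁻¹ := by
  rw [ω_eq_exp, ← exp_conj, ← exp_neg, map_mul, conj_ofReal, conj_I, mul_neg]

/-- The Gaussian kernel of the Mordell integral. Its poles are the integer multiples of `ω`. -/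
noncomputable def kernel (y : ℂ) : ℂ := cexp (-(π * y ^ 2)) / (2 * sinh (π * ω * y))

/-- The function `y * kernel y` with its singularity at `0` removed. -/
noncomputable def regularKernel (y : ℂ) : ℂ :=
  cexp (-(π * y ^ 2)) * (dslope (fun z => 2 * sinh (π * ω * z)) 0 y)⁻¹

lemma kernel_neg (y : ℂ) : kernel (-y) = -kernel y := by
  simp [kernel, div_neg]

lemma regularKernel_of_ne_zero {y : ℂ} (hy : y ≠ 0) : regularKernel y = y * kernel y := by
  rw [regularKernel, kernel, dslope_of_ne _ hy, slope_def_field]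
  simp [div_eq_mul_inv]
  ring

lemma kernel_eq_regularKernel {y : ℂ} (hy : y ≠ 0) : kernel y = y⁻¹ * regularKernel y := by
  rw [regularKernel_of_ne_zero hy, inv_mul_cancel_left₀ hy]

lemma abs_re_le_norm_sinh (w : ℂ) : |w.re| ≤ ‖sinh w‖ := by
  have hexp : |Real.exp w.re - Real.exp (-w.re)| ≤ ‖cexp w - cexp (-w)‖ := by
    simpa [norm_exp] using abs_norm_sub_norm_le (cexp w) (cexp (-w))
  calc |w.re| ≤ Real.sinh |w.re| := Real.self_le_sinh_iff.mpr (abs_nonneg _)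
    _ = |Real.exp w.re - Real.exp (-w.re)| / 2 := by
      rw [← Real.abs_sinh, Real.sinh_eq, abs_div, abs_two]
    _ ≤ ‖cexp w - cexp (-w)‖ / 2 := by gcongr
    _ = ‖sinh w‖ := by rw [sinh, norm_div, norm_ofNat]

lemma re_pi_mul_ω_mul (y : ℂ) : (π * ω * y).re = π * (√2 / 2) * (y.re - y.im) := by
  simp [re_ω, im_ω]
  ring

lemma two_le_pi_mul_sqrt_two_div_two : 2 ≤ π * (√2 / 2) := by
  nlinarith [Real.pi_gt_three, Real.one_lt_sqrt_two, Real.sq_sqrt (zero_le_two (α := ℝ))]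

lemma sqrt_two_div_two_lt_one : √2 / 2 < 1 := by
  nlinarith [Real.sq_sqrt (zero_le_two (α := ℝ)), Real.sqrt_nonneg 2]

lemma eq_zero_of_sinh_eq_zero {y : ℂ} (hy : |y.im| < √2 / 2) (h : sinh (π * ω * y) = 0) :
    y = 0 := by
  obtain ⟨k, hk⟩ := sin_eq_zero_iff.mp (show sin (π * ω * y * I) = 0 by rw [sin_mul_I, h, zero_mul])
  have hpi : (π : ℂ) ≠ 0 := ofReal_ne_zero.mpr Real.pi_ne_zero
  have hyk : y = -k * ω := by
    have hk' : ω * y * I = k := mul_left_cancel₀ hpi (by linear_combination hk)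
    linear_combination -ω * hk' + y * I * sq_ω + y * I_sq
  have him : |(k : ℝ)| * (√2 / 2) < 1 * (√2 / 2) := by
    simpa [hyk, im_ω, abs_mul, abs_div, abs_of_nonneg (Real.sqrt_nonneg 2)] using hy
  have hk0 : k = 0 :=
    Int.abs_lt_one_iff.mp (by exact_mod_cast lt_of_mul_lt_mul_right him (by positivity))
  simp [hyk, hk0]

lemma differentiable_dslope_sinh :
    Differentiable ℂ (dslope (fun z => 2 * sinh (π * ω * z)) 0) := by
  rw [← differentiableOn_univ, differentiableOn_dslope univ_mem]
  fun_prop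

lemma dslope_sinh_ne_zero {y : ℂ} (hy : |y.im| < √2 / 2) :
    dslope (fun z => 2 * sinh (π * ω * z)) 0 y ≠ 0 := by
  rcases eq_or_ne y 0 with rfl | h0
  · have hderiv := (((hasDerivAt_id (0 : ℂ)).const_mul (π * ω)).csinh).const_mul 2
    simp only [id] at hderiv
    simp [dslope_same, hderiv.deriv, ω_ne_zero, Real.pi_ne_zero]
  · rw [dslope_of_ne _ h0, slope_def_field]
    simpa [h0] using mt (eq_zero_of_sinh_eq_zero hy) h0

lemma differentiableOn_regularKernel : DifferentiableOn ℂ regularKernel {y | |y.im| < √2 / 2} :=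
  DifferentiableOn.mul (by fun_prop)
    (differentiable_dslope_sinh.differentiableOn.inv fun _ hy => dslope_sinh_ne_zero hy)

lemma exists_norm_exp_neg_sq_mul_exp_le (c : ℝ) : ∃ C, ∀ y : ℂ, |y.im| ≤ 1 →
    ‖cexp (-(π * y ^ 2))‖ * Real.exp (c * ‖y‖) ≤ C * Real.exp (-1 * |y.re|) := by
  refine ⟨Real.exp (π + |c| + (|c| + 1) ^ 2), fun y hy => ?_⟩
  have hnorm : c * ‖y‖ ≤ |c| * (|y.re| + 1) :=
    (mul_le_mul_of_nonneg_right (le_abs_self c) (norm_nonneg y)).trans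
      (mul_le_mul_of_nonneg_left ((norm_le_abs_re_add_abs_im y).trans (by gcongr)) (abs_nonneg c))
  have hre : (-(π * y ^ 2)).re = -π * |y.re| ^ 2 + π * |y.im| ^ 2 := by
    simp [sq]
    ring
  have him : π * |y.im| ^ 2 ≤ π * 1 := by
    gcongr
    exact pow_le_one₀ (abs_nonneg _) hy
  rw [norm_exp, ← Real.exp_add, ← Real.exp_add, hre]
  refine Real.exp_le_exp.mpr ?_
  nlinarith [Real.pi_gt_three, sq_nonneg (|y.re| - (|c| + 1)), sq_nonneg |y.re|,
    sq_nonneg (|c| + 1)]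

lemma exists_norm_inv_dslope_sinh_le {η : ℝ} (hη : η < √2 / 2) : ∃ C, ∀ y : ℂ, |y.im| ≤ η →
    ‖(dslope (fun z => 2 * sinh (π * ω * z)) 0 y)⁻¹‖ ≤ C * (‖y‖ + 1) := by
  obtain ⟨M, hM⟩ := (isCompact_Icc.reProdIm isCompact_Icc).exists_bound_of_continuousOn
    (s := Icc (-2) 2 ×ℂ Icc (-η) η) (f := fun y => (dslope (fun z => 2 * sinh (π * ω * z)) 0 y)⁻¹)
    (differentiable_dslope_sinh.continuous.continuousOn.inv₀ fun y hy =>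
      dslope_sinh_ne_zero ((abs_le.mpr hy.2).trans_lt hη))
  refine ⟨max 1 M, fun y hy => ?_⟩
  rcases le_total |y.re| 2 with hre | hre
  · refine (hM y ⟨abs_le.mp hre, abs_le.mp hy⟩).trans ((le_max_right 1 M).trans ?_)
    exact le_mul_of_one_le_right (zero_le_one.trans (le_max_left _ _)) (by simp)
  · have hy0 : y ≠ 0 := by
      rintro rfl
      norm_num at hre
    have hsinh : 1 ≤ ‖2 * sinh (π * ω * y)‖ := by
      have hdist : 1 ≤ |y.re - y.im| := by
        linarith [abs_sub_abs_le_abs_sub y.re y.im, sqrt_two_div_two_lt_one]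
      have hre_le := abs_re_le_norm_sinh (π * ω * y)
      rw [re_pi_mul_ω_mul, abs_mul, abs_of_nonneg (by positivity)] at hre_le
      rw [norm_mul, norm_ofNat]
      nlinarith [two_le_pi_mul_sqrt_two_div_two]
    calc ‖(dslope (fun z => 2 * sinh (π * ω * z)) 0 y)⁻¹‖
        = ‖y‖ / ‖2 * sinh (π * ω * y)‖ := by
          rw [dslope_of_ne _ hy0, slope_def_field, ← norm_div, inv_div]
          simp
      _ ≤ 1 * (‖y‖ + 1) := by linarith [div_le_self (norm_nonneg y) hsinh]
      _ ≤ max 1 M * (‖y‖ + 1) := by gcongr; exact le_max_left _ _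

theorem exists_norm_regularKernel_mul_exp_le {η : ℝ} (hη : η < √2 / 2) (c : ℝ) :
    ∃ C, ∀ y : ℂ, |y.im| ≤ η →
      ‖regularKernel y‖ * Real.exp (c * ‖y‖) ≤ C * Real.exp (-1 * |y.re|) := by
  obtain ⟨K, hK⟩ := exists_norm_exp_neg_sq_mul_exp_le (c + 1)
  obtain ⟨C, hC⟩ := exists_norm_inv_dslope_sinh_le hη
  refine ⟨|C| * K, fun y hy => ?_⟩
  have hinv : ‖(dslope (fun z => 2 * sinh (π * ω * z)) 0 y)⁻¹‖ ≤ |C| * Real.exp ‖y‖ :=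
    (hC y hy).trans (mul_le_mul (le_abs_self C) (Real.add_one_le_exp _) (by positivity)
      (abs_nonneg C))
  calc ‖regularKernel y‖ * Real.exp (c * ‖y‖)
      ≤ ‖cexp (-(π * y ^ 2))‖ * (|C| * Real.exp ‖y‖) * Real.exp (c * ‖y‖) := by
        rw [regularKernel, norm_mul]
        gcongr
    _ = |C| * (‖cexp (-(π * y ^ 2))‖ * Real.exp ((c + 1) * ‖y‖)) := by
        rw [add_one_mul, Real.exp_add]
        ring
    _ ≤ |C| * (K * Real.exp (-1 * |y.re|)) :=
        mul_le_mul_of_nonneg_left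
          (hK y (hy.trans (hη.trans sqrt_two_div_two_lt_one).le)) (abs_nonneg C)
    _ = |C| * K * Real.exp (-1 * |y.re|) := (mul_assoc _ _ _).symm

section RegularKernel

variable {H : ℂ → ℂ} {α β A c : ℝ}

lemma exists_norm_mul_regularKernel_le {S : Set ℂ} {η : ℝ} (hη : η < √2 / 2)
    (hS : ∀ z ∈ S, |z.im| ≤ η) (hH : ∀ z ∈ S, ‖H z‖ ≤ A * Real.exp (c * ‖z‖)) :
    ∃ C, ∀ z ∈ S, ‖H z * regularKernel z‖ ≤ C * Real.exp (-1 * |z.re|) := by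
  obtain ⟨C, hC⟩ := exists_norm_regularKernel_mul_exp_le hη c
  refine ⟨|A| * C, fun z hz => ?_⟩
  calc ‖H z * regularKernel z‖ ≤ |A| * Real.exp (c * ‖z‖) * ‖regularKernel z‖ := by
        rw [norm_mul]
        gcongr
        exact (hH z hz).trans (by gcongr; exact le_abs_self A)
    _ ≤ |A| * C * Real.exp (-1 * |z.re|) := by
        rw [mul_assoc, mul_assoc, mul_comm (Real.exp _)]
        exact mul_le_mul_of_nonneg_left (hC z (hS z hz)) (abs_nonneg A)

lemma integrable_mul_regularKernel (hα : |α| < √2 / 2) (hc : ContinuousOn H {z | z.im = α})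
    (hH : ∀ z : ℂ, z.im = α → ‖H z‖ ≤ A * Real.exp (c * ‖z‖)) :
    Integrable fun t : ℝ => H (t + α * I) * regularKernel (t + α * I) := by
  obtain ⟨C, hC⟩ := exists_norm_mul_regularKernel_le hα (S := {z | z.im = α})
    (fun z (hz : z.im = α) => hz ▸ le_rfl) hH
  exact integrable_horizontal one_pos (hc.mul (differentiableOn_regularKernel.continuousOn.mono
    fun z (hz : z.im = α) => show |z.im| < √2 / 2 from hz ▸ hα)) hC

theorem integral_mul_regularKernel_shift (hα : |α| < √2 / 2) (hβ : |β| < √2 / 2)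
    (hc : ContinuousOn H {z | z.im ∈ uIcc α β})
    (hd : DifferentiableOn ℂ H {z | z.im ∈ Ioo (min α β) (max α β)})
    (hH : ∀ z : ℂ, z.im ∈ uIcc α β → ‖H z‖ ≤ A * Real.exp (c * ‖z‖)) :
    ∫ t : ℝ, H (t + α * I) * regularKernel (t + α * I) =
      ∫ t : ℝ, H (t + β * I) * regularKernel (t + β * I) := by
  have hstrip {y : ℝ} (hy : y ∈ uIcc α β) : |y| ≤ max |α| |β| := by
    obtain h | h := mem_uIcc.mp hy
    · exact abs_le_max_abs_abs h.1 h.2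
    · exact max_comm |α| |β| ▸ abs_le_max_abs_abs h.1 h.2
  obtain ⟨C, hC⟩ := exists_norm_mul_regularKernel_le (max_lt hα hβ)
    (S := {z | z.im ∈ uIcc α β}) (fun z hz => hstrip hz) hH
  refine integral_horizontal_eq_of_norm_le_exp (f := fun z => H z * regularKernel z) one_pos
    (hc.mul (differentiableOn_regularKernel.continuousOn.mono fun z hz =>
      (hstrip hz).trans_lt (max_lt hα hβ)))
    (hd.mul (differentiableOn_regularKernel.mono fun z hz =>
      (hstrip (Ioo_subset_Icc_self hz)).trans_lt (max_lt hα hβ))) hC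

end RegularKernel

section Mordell

lemma sinh_horizontal_ne_zero {η : ℝ} (hη0 : η ≠ 0) (hη : |η| < √2 / 2) (t : ℝ) :
    sinh (π * ω * (t + η * I)) ≠ 0 := fun h => by
  have him := congr_arg Complex.im (eq_zero_of_sinh_eq_zero (by simpa using hη) h)
  exact hη0 (by simpa using him)

lemma continuous_kernel_horizontal {η : ℝ} (hη0 : η ≠ 0) (hη : |η| < √2 / 2) :
    Continuous fun t : ℝ => kernel (t + η * I) :=
  Continuous.div (by fun_prop) (by fun_prop) fun t =>
    mul_ne_zero two_ne_zero (sinh_horizontal_ne_zero hη0 hη t)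

lemma integrable_mul_kernel {H : ℂ → ℂ} {η A c : ℝ} (hη0 : η ≠ 0) (hη : |η| < √2 / 2)
    (hc : ContinuousOn H {z | z.im = η}) (hH : ∀ z : ℂ, z.im = η → ‖H z‖ ≤ A * Real.exp (c * ‖z‖)) :
    Integrable fun t : ℝ => H (t + η * I) * kernel (t + η * I) := by
  have hne {z : ℂ} (hz : z.im = η) : z ≠ 0 := by
    rintro rfl
    exact hη0 hz.symm
  have hint := integrable_mul_regularKernel (H := fun z => H z * z⁻¹) (A := A * |η|⁻¹) hη
    (hc.mul (continuousOn_inv₀.mono fun z hz => hne hz)) fun z hz => by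
      have hinv : ‖z⁻¹‖ ≤ |η|⁻¹ := by
        rw [norm_inv]
        exact inv_anti₀ (abs_pos.mpr hη0) (hz ▸ abs_im_le_norm z)
      rw [norm_mul, mul_right_comm]
      exact mul_le_mul (hH z hz) hinv (norm_nonneg _) ((norm_nonneg _).trans (hH z hz))
  refine hint.congr (Eventually.of_forall fun t => ?_)
  simp only [mul_assoc, kernel_eq_regularKernel (hne (z := t + η * I) (by simp))]

/-- The Mordell integral `∫ e^{-2πρy} kernel y dy` over the line `Im y = η`. -/
noncomputable def mordell (η : ℝ) (ρ : ℂ) : ℂ :=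
  ∫ t : ℝ, cexp (-(2 * π * ρ * (t + η * I))) * kernel (t + η * I)

lemma norm_cexp_neg_mul_le (ρ z : ℂ) :
    ‖cexp (-(2 * π * ρ * z))‖ ≤ 1 * Real.exp (2 * π * ‖ρ‖ * ‖z‖) := by
  rw [one_mul, norm_exp]
  refine Real.exp_le_exp.mpr ((re_le_norm _).trans_eq ?_)
  simp [abs_of_pos Real.pi_pos]

lemma integrable_mordell {η : ℝ} (hη0 : η ≠ 0) (hη : |η| < √2 / 2) (ρ : ℂ) :
    Integrable fun t : ℝ => cexp (-(2 * π * ρ * (t + η * I))) * kernel (t + η * I) :=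
  integrable_mul_kernel (H := fun z => cexp (-(2 * π * ρ * z))) hη0 hη (by fun_prop)
    fun z _ => norm_cexp_neg_mul_le ρ z

lemma kernel_add_ω (y : ℂ) : kernel (y + ω) = cexp (-(2 * π * ω * y)) * kernel y := by
  have hsq : -(π * (y + ω) ^ 2) = -(2 * π * ω * y) + -(π * y ^ 2) + -(π * I) := by
    linear_combination -π * sq_ω
  have hlin : π * ω * (y + ω) = π * ω * y + π * I := by linear_combination π * sq_ω
  rw [kernel, kernel, hsq, hlin, exp_add, exp_add, exp_neg_pi_mul_I, sinh_add, sinh_mul_I,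
    cosh_mul_I]
  simp [neg_div_neg_eq, mul_div_assoc]

lemma kernel_sub_mul_kernel {y : ℂ} (hy : sinh (π * ω * y) ≠ 0) :
    kernel y - cexp (-(2 * π * ω * y)) * kernel y = cexp (-(π * y ^ 2) - π * ω * y) := by
  have hsinh : 1 - cexp (-(2 * π * ω * y)) = cexp (-(π * ω * y)) * (2 * sinh (π * ω * y)) := by
    rw [two_sinh, mul_sub, ← exp_add, ← exp_add, neg_add_cancel, exp_zero]
    ring_nf
  rw [← one_sub_mul, hsinh, kernel, sub_eq_add_neg, exp_add]
  field_simp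

lemma integral_cexp_quadratic_horizontal (η : ℝ) (ρ : ℂ) :
    ∫ t : ℝ, cexp (-(2 * π * ρ * (t + η * I)) + (-(π * (t + η * I) ^ 2) - π * ω * (t + η * I))) =
      ω * cexp (π * ρ ^ 2 + π * ρ * ω) := by
  have hpi : (π : ℂ) ≠ 0 := ofReal_ne_zero.mpr Real.pi_ne_zero
  have hω : ω = cexp (π * ω ^ 2 / 4) := by rw [sq_ω, ω]
  have hquad := integral_cexp_quadratic (b := -π) (by simpa using Real.pi_pos)
    (-(2 * π * ρ) - 2 * π * η * I - π * ω) (-(2 * π * ρ * (η * I)) + π * η ^ 2 - π * ω * (η * I))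
  rw [neg_neg, div_self hpi, one_cpow, one_mul] at hquad
  convert! hquad using 1
  · congr! 3 with t
    linear_combination -π * η ^ 2 * I_sq
  · nth_rw 1 [hω]
    rw [← exp_add]
    congr 1
    field_simp
    linear_combination -4 * η ^ 2 * I_sq

lemma differentiable_dslope_cexp_mul (a : ℂ) :
    Differentiable ℂ (dslope (fun y => cexp (a * y)) 0) := by
  rw [← differentiableOn_univ, differentiableOn_dslope univ_mem]
  fun_prop

lemma mul_dslope_cexp_mul (a z : ℂ) :
    z * dslope (fun y => cexp (a * y)) 0 z = cexp (a * z) - 1 := by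
  simpa using sub_smul_dslope (fun y => cexp (a * y)) 0 z

lemma norm_dslope_cexp_mul_le (a z : ℂ) :
    ‖dslope (fun y => cexp (a * y)) 0 z‖ ≤ ‖a‖ * Real.exp (‖a‖ * ‖z‖) := by
  rcases eq_or_ne z 0 with rfl | hz
  · have hderiv := ((hasDerivAt_id (0 : ℂ)).const_mul a).cexp
    simp only [id] at hderiv
    simp [dslope_same, hderiv.deriv]
  · refine le_of_mul_le_mul_left ?_ (norm_pos_iff.mpr hz)
    rw [← norm_mul, mul_dslope_cexp_mul]
    have := norm_exp_sub_sum_le_norm_mul_exp (a * z) 1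
    simp only [Finset.sum_range_one, pow_zero, Nat.factorial_zero, Nat.cast_one, div_one, pow_one,
      norm_mul] at this
    linarith

variable {η : ℝ} (hη : -(√2 / 2) < η) (hη0 : η < 0)
include hη hη0

lemma mordell_sub_mul_mordell (ρ : ℂ) :
    mordell η ρ - cexp (2 * π * ρ * ω) * mordell (η + √2 / 2) ρ =
      ω * cexp (π * ρ ^ 2 + π * ρ * ω) := by
  have hshift : mordell (η + √2 / 2) ρ = ∫ t : ℝ,
      cexp (-(2 * π * ρ * (t + η * I + ω))) * kernel (t + η * I + ω) := by
    rw [mordell, ← integral_add_right_eq_self _ (√2 / 2)]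
    congr! 2
    rw [ω_eq_add_mul_I]
    push_cast
    ring_nf
  have hperiod (y : ℂ) :
      cexp (2 * π * ρ * ω) * (cexp (-(2 * π * ρ * (y + ω))) * kernel (y + ω)) =
        cexp (-(2 * π * ρ * y)) * (cexp (-(2 * π * ω * y)) * kernel y) := by
    rw [kernel_add_ω, ← mul_assoc, ← exp_add]
    ring_nf
  have hη_abs : |η| < √2 / 2 := abs_lt.mpr ⟨hη, by linarith⟩
  have hint := integrable_mordell hη0.ne hη_abs ρ
  have hint' : Integrable fun t : ℝ => cexp (-(2 * π * ρ * (t + η * I))) *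
      (cexp (-(2 * π * ω * (t + η * I))) * kernel (t + η * I)) := by
    convert! integrable_mordell hη0.ne hη_abs (ρ + ω) using 2 with t
    rw [← mul_assoc, ← exp_add]
    ring_nf
  rw [hshift, mordell, ← integral_const_mul]
  simp_rw [hperiod]
  rw [← integral_sub hint hint', ← integral_cexp_quadratic_horizontal η ρ]
  congr! 2 with t
  rw [exp_add, ← kernel_sub_mul_kernel (sinh_horizontal_ne_zero hη0.ne hη_abs t), mul_sub]

/- The left side is `2πi` times the residue of `e^{-2πρy} kernel y` at `0`. Subtracting the
case `ρ = 0` replaces the exponential by `e^{-2πρy} - 1`, which cancels the pole, so no residue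
calculus is needed. -/
lemma mordell_sub_mordell_eq (ρ : ℂ) :
    mordell η ρ - mordell (η + √2 / 2) ρ = mordell η 0 - mordell (η + √2 / 2) 0 := by
  have hη_abs : |η| < √2 / 2 := abs_lt.mpr ⟨hη, by linarith⟩
  have hη_abs' : |η + √2 / 2| < √2 / 2 := abs_lt.mpr ⟨by linarith, by linarith⟩
  set H : ℂ → ℂ := dslope (fun y => cexp (-(2 * π * ρ) * y)) 0
  have hgrowth (z : ℂ) : ‖H z‖ ≤ ‖-(2 * π * ρ)‖ * Real.exp (‖-(2 * π * ρ)‖ * ‖z‖) :=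
    norm_dslope_cexp_mul_le _ z
  have hH : Differentiable ℂ H := differentiable_dslope_cexp_mul _
  have hdiff {α : ℝ} (hα0 : α ≠ 0) (hα : |α| < √2 / 2) :
      mordell α ρ - mordell α 0 = ∫ t : ℝ, H (t + α * I) * regularKernel (t + α * I) := by
    rw [mordell, mordell,
      ← integral_sub (integrable_mordell hα0 hα ρ) (integrable_mordell hα0 hα 0)]
    congr! 2 with t
    have hne : (t + α * I : ℂ) ≠ 0 := fun h => hα0 (by simpa using congr_arg Complex.im h)
    rw [regularKernel_of_ne_zero hne, ← mul_assoc, mul_comm (H _), mul_dslope_cexp_mul]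
    simp [sub_mul]
  have hcontour := integral_mul_regularKernel_shift hη_abs hη_abs' hH.continuous.continuousOn
    hH.differentiableOn fun z _ => hgrowth z
  rw [← hdiff hη0.ne hη_abs, ← hdiff (by linarith) hη_abs'] at hcontour
  linear_combination hcontour

theorem mordell_formula (ρ : ℂ) :
    (1 - cexp (2 * π * ρ * ω)) * mordell η ρ =
      ω * (cexp (π * ρ ^ 2 + π * ρ * ω) - cexp (2 * π * ρ * ω)) := by
  have hρ := mordell_sub_mul_mordell hη hη0 ρ
  have hzero := mordell_sub_mul_mordell hη hη0 0
  simp only [mul_zero, zero_mul, exp_zero, one_mul, zero_pow two_ne_zero, add_zero, mul_one]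
    at hzero
  linear_combination hρ - cexp (2 * π * ρ * ω) * (mordell_sub_mordell_eq hη hη0 ρ + hzero)

end Mordell

section Phi

/-- The function `φ` on the positive half-line whose Mellin transform and that of its conjugate
are the two line integrals of the formula. The two terms have cancelling poles at `0`. -/
noncomputable def φ (x : ℝ) : ℂ := (cexp (2 * π * ω * x) - 1)⁻¹ - kernel x

lemma cexp_two_pi_ω_mul_sub_one_ne_zero {x : ℝ} (hx : 0 < x) : cexp (2 * π * ω * x) - 1 ≠ 0 := by
  intro h
  have hnorm := congr_arg norm (sub_eq_zero.mp h)
  have hre : (2 * π * ω * x : ℂ).re = 2 * π * (√2 / 2) * x := by simp [re_ω]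
  rw [norm_exp, norm_one, Real.exp_eq_one_iff, hre] at hnorm
  have := Real.pi_pos
  exact hnorm.not_gt (by positivity)

lemma mul_φ {x : ℝ} (hx : 0 < x) :
    (cexp (2 * π * ω * x) - 1) * φ x = 1 - cexp (-(π * x ^ 2) + π * ω * x) := by
  have hsinh : cexp (2 * π * ω * x) - 1 = cexp (π * ω * x) * (2 * sinh (π * ω * x)) := by
    rw [two_sinh, mul_sub, ← exp_add, ← exp_add, add_neg_cancel, exp_zero]
    ring_nf
  have hne := cexp_two_pi_ω_mul_sub_one_ne_zero hx
  rw [hsinh] at hne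
  rw [φ, kernel, hsinh, exp_add]
  have := right_ne_zero_of_mul (right_ne_zero_of_mul hne)
  field_simp

lemma mul_conj_φ {x : ℝ} (hx : 0 < x) :
    (cexp (2 * π * ω⁻¹ * x) - 1) * starRingEnd ℂ (φ x) =
      1 - cexp (-(π * x ^ 2) + π * ω⁻¹ * x) := by
  simpa [← exp_conj, conj_ω, conj_ofNat] using congr_arg (starRingEnd ℂ) (mul_φ hx)

lemma continuousOn_φ : ContinuousOn φ (Ioi 0) := by
  refine ContinuousOn.congr (f := fun x : ℝ =>
    (1 - cexp (-(π * x ^ 2) + π * ω * x)) / (cexp (2 * π * ω * x) - 1)) ?_ fun x hx => ?_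
  · exact ContinuousOn.div (by fun_prop) (by fun_prop) fun x hx =>
      cexp_two_pi_ω_mul_sub_one_ne_zero hx
  · exact eq_div_of_mul_eq (cexp_two_pi_ω_mul_sub_one_ne_zero hx) (mul_comm _ (φ x) ▸ mul_φ hx)

variable {η : ℝ}

theorem cexp_mul_mordell_ofReal (hη : -(√2 / 2) < η) (hη0 : η < 0) {x : ℝ} (hx : 0 < x) :
    cexp (-(π * x ^ 2) - π * ω * x) * mordell η x = -ω * φ x := by
  have hM := mordell_formula hη hη0 x
  have hcancel : cexp (-(π * x ^ 2) - π * ω * x) * cexp (π * x ^ 2 + π * x * ω) = 1 := by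
    rw [← exp_add, ← exp_zero]
    ring_nf
  have hmul : cexp (-(π * x ^ 2) - π * ω * x) * cexp (2 * π * ω * x) =
      cexp (-(π * x ^ 2) + π * ω * x) := by
    rw [← exp_add]
    ring_nf
  rw [mul_right_comm _ (x : ℂ) ω] at hM
  refine mul_left_cancel₀ (cexp_two_pi_ω_mul_sub_one_ne_zero hx) ?_
  linear_combination
    -cexp (-(π * x ^ 2) - π * ω * x) * hM + ω * mul_φ hx - ω * hcancel + ω * hmul

theorem mordell_I_mul_ofReal (hη : -(√2 / 2) < η) (hη0 : η < 0) {x : ℝ} (hx : 0 < x) :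
    mordell η (I * x) = -ω * starRingEnd ℂ (φ x) := by
  have hIω : I * ω = -ω⁻¹ := mul_right_cancel₀ ω_ne_zero <| by
    rw [neg_mul, inv_mul_cancel₀ ω_ne_zero]
    linear_combination I * sq_ω + I_sq
  have hM := mordell_formula hη hη0 (I * x)
  rw [show 2 * π * (I * x) * ω = -(2 * π * ω⁻¹ * x) by linear_combination 2 * π * x * hIω,
    show π * (I * x) ^ 2 + π * (I * x) * ω = -(2 * π * ω⁻¹ * x) + (-(π * x ^ 2) + π * ω⁻¹ * x) by
      linear_combination π * x * hIω + π * x ^ 2 * I_sq, exp_add, exp_neg] at hM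
  have hne : cexp (2 * π * ω⁻¹ * x) - 1 ≠ 0 := by
    simpa [← exp_conj, conj_ω, conj_ofNat] using
      (map_ne_zero (starRingEnd ℂ)).mpr (cexp_two_pi_ω_mul_sub_one_ne_zero hx)
  have hinv := mul_inv_cancel₀ (exp_ne_zero (2 * π * ω⁻¹ * x))
  refine mul_left_cancel₀ hne ?_
  linear_combination cexp (2 * π * ω⁻¹ * x) * hM + ω * mul_conj_φ hx +
    (mordell η (I * x) + ω * cexp (-(π * x ^ 2) + π * ω⁻¹ * x) - ω) * hinv

lemma norm_cexp_I_mul_mul_kernel (η x t : ℝ) :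
    ‖cexp (-(2 * π * (I * x) * (t + η * I))) * kernel (t + η * I)‖ =
      Real.exp (2 * π * η * x) * ‖kernel (t + η * I)‖ := by
  have hre : (-(2 * π * (I * x) * (t + η * I))).re = 2 * π * η * x := by
    simp
    ring
  rw [norm_mul, norm_exp, hre]

lemma norm_mordell_I_mul_ofReal_le (x : ℝ) :
    ‖mordell η (I * x)‖ ≤ Real.exp (2 * π * η * x) * ∫ t : ℝ, ‖kernel (t + η * I)‖ := by
  rw [mordell, ← integral_const_mul]
  exact (norm_integral_le_integral_norm _).trans_eq
    (integral_congr_ae (Eventually.of_forall (norm_cexp_I_mul_mul_kernel η x)))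

lemma exists_norm_φ_le : ∃ C, ∀ x > 0, ‖φ x‖ ≤ C * Real.exp (-π * x) := by
  have hη : -(√2 / 2) < -(1 / 2 : ℝ) := by linarith [Real.one_lt_sqrt_two]
  have hη0 : -(1 / 2 : ℝ) < 0 := by norm_num
  refine ⟨∫ t : ℝ, ‖kernel (t + (-(1 / 2) : ℝ) * I)‖, fun x hx => ?_⟩
  have hle := norm_mordell_I_mul_ofReal_le (η := -(1 / 2)) x
  rw [mordell_I_mul_ofReal hη hη0 hx, norm_mul, norm_neg, norm_conj, norm_ω, one_mul] at hle
  rw [mul_comm]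
  refine hle.trans_eq ?_
  congr 2
  ring

lemma isBigO_φ_atTop : φ =O[atTop] fun x => Real.exp (-π * x) := by
  obtain ⟨C, hC⟩ := exists_norm_φ_le
  refine .of_bound C ((eventually_gt_atTop 0).mono fun x hx => ?_)
  simpa [Real.norm_of_nonneg] using hC x hx

lemma isBigO_φ_zero : φ =O[𝓝[>] 0] fun x => x ^ (-(0 : ℝ)) := by
  obtain ⟨C, hC⟩ := exists_norm_φ_le
  refine .of_bound |C| (eventually_mem_nhdsWithin.mono fun x (hx : 0 < x) => (hC x hx).trans ?_)
  have hexp : Real.exp (-π * x) ≤ 1 := Real.exp_le_one_iff.mpr (by nlinarith [Real.pi_pos])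
  simpa using mul_le_mul (le_abs_self C) hexp (Real.exp_pos _).le (abs_nonneg C)

lemma mellinConvergent_φ {s : ℂ} (hs : 0 < s.re) : MellinConvergent φ s :=
  mellinConvergent_of_isBigO_rpow_exp Real.pi_pos
    (continuousOn_φ.locallyIntegrableOn measurableSet_Ioi) isBigO_φ_atTop isBigO_φ_zero hs

lemma differentiableAt_mellin_φ {s : ℂ} (hs : 0 < s.re) : DifferentiableAt ℂ (mellin φ) s :=
  mellin_differentiableAt_of_isBigO_rpow_exp Real.pi_pos
    (continuousOn_φ.locallyIntegrableOn measurableSet_Ioi) isBigO_φ_atTop isBigO_φ_zero hs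

end Phi

section LineIntegrals

lemma exists_norm_kernel_le {η : ℝ} (hη0 : η ≠ 0) (hη : |η| < √2 / 2) :
    ∃ C, ∀ t : ℝ, ‖kernel (t + η * I)‖ ≤ C * Real.exp (-π * t ^ 2) := by
  obtain ⟨C, hC⟩ := exists_norm_inv_dslope_sinh_le hη
  refine ⟨Real.exp (π * η ^ 2) * (|C| * (1 + |η|⁻¹)), fun t => ?_⟩
  have hne : (t + η * I : ℂ) ≠ 0 := fun h => hη0 (by simpa using congr_arg Complex.im h)
  have hnorm : |η| ≤ ‖(t + η * I : ℂ)‖ := by simpa using abs_im_le_norm (t + η * I : ℂ)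
  have hexp : ‖cexp (-(π * (t + η * I : ℂ) ^ 2))‖ =
      Real.exp (π * η ^ 2) * Real.exp (-π * t ^ 2) := by
    rw [norm_exp, ← Real.exp_add]
    congr 1
    simp [sq]
    ring
  have hinv : ‖(t + η * I : ℂ)‖⁻¹ * (C * (‖(t + η * I : ℂ)‖ + 1)) ≤ |C| * (1 + |η|⁻¹) := by
    have := norm_pos_iff.mpr hne
    calc ‖(t + η * I : ℂ)‖⁻¹ * (C * (‖(t + η * I : ℂ)‖ + 1))
        = C * (1 + ‖(t + η * I : ℂ)‖⁻¹) := by field_simp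
      _ ≤ |C| * (1 + |η|⁻¹) := by
        gcongr
        exact le_abs_self C
  calc ‖kernel (t + η * I)‖
      = ‖cexp (-(π * (t + η * I : ℂ) ^ 2))‖ * (‖(t + η * I : ℂ)‖⁻¹ *
          ‖(dslope (fun z => 2 * sinh (π * ω * z)) 0 (t + η * I))⁻¹‖) := by
        rw [kernel_eq_regularKernel hne, regularKernel, norm_mul, norm_mul, norm_inv]
        ring
    _ ≤ Real.exp (π * η ^ 2) * Real.exp (-π * t ^ 2) * (|C| * (1 + |η|⁻¹)) := by
        rw [hexp]
        refine mul_le_mul_of_nonneg_left ?_ (by positivity)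
        exact (mul_le_mul_of_nonneg_left (hC _ (by simp)) (by positivity)).trans hinv
    _ = _ := by ring

/-- The integral `e^{z²/4} Γ(s) U(s - 1/2, z)`, where `U` is the parabolic cylinder function. -/
noncomputable def parabolicCylinderIntegral (s z : ℂ) : ℂ :=
  ∫ w in Ioi (0 : ℝ), cexp (-((w : ℂ) ^ 2 / 2) - z * w) * (w : ℂ) ^ (s - 1)

lemma parabolicCylinderIntegral_sqrt_mul (s z : ℂ) :
    parabolicCylinderIntegral s (√(2 * π) * z) =
      (2 * π) ^ (s / 2) * mellin (fun x : ℝ => cexp (-(π * x ^ 2) - 2 * π * z * x)) s := by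
  have hsqrt : 0 < √(2 * π) := Real.sqrt_pos.mpr Real.two_pi_pos
  have hsq : ((√(2 * π) : ℝ) : ℂ) ^ 2 = 2 * π := by
    rw [← ofReal_pow, Real.sq_sqrt Real.two_pi_pos.le]
    push_cast
    rfl
  have hpow : ((√(2 * π) : ℝ) : ℂ) ^ s = (2 * π) ^ (s / 2) := by
    have hne : ((√(2 * π) : ℝ) : ℂ) ≠ 0 := ofReal_ne_zero.mpr hsqrt.ne'
    rw [← hsq, sq, ofReal_mul_cpow hsqrt hne, ← cpow_add _ _ hne, add_halves]
  have hscale := mellin_comp_mul_left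
    (fun w : ℝ => cexp (-((w : ℂ) ^ 2 / 2) - √(2 * π) * z * w)) s hsqrt
  have hfun (x : ℝ) : -(((√(2 * π) * x : ℝ) : ℂ) ^ 2 / 2) - √(2 * π) * z * (√(2 * π) * x : ℝ) =
      -(π * x ^ 2) - 2 * π * z * x := by
    push_cast
    linear_combination (-x ^ 2 / 2 - z * x) * hsq
  simp only [hfun, smul_eq_mul] at hscale
  rw [hscale, ← hpow, ← mul_assoc, ← cpow_add _ _ (by exact_mod_cast hsqrt.ne'), add_neg_cancel,
    cpow_zero, one_mul, parabolicCylinderIntegral, mellin]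
  simp only [smul_eq_mul, mul_comm]

/-- The integrand of the first line integral of the formula. -/
noncomputable def descendingIntegrand (s u : ℂ) : ℂ :=
  cexp (-(π * I * u ^ 2) + π * I * u) / (2 * I * cos (π * u)) *
    ((Gamma s)⁻¹ * parabolicCylinderIntegral s (√(2 * π) * ω * u))

/-- The integrand of the second line integral of the formula. -/
noncomputable def ascendingIntegrand (s u : ℂ) : ℂ :=
  cexp (π * I * u ^ 2 - π * I * u) / (2 * I * cos (π * u)) *
    ((Gamma (1 - s))⁻¹ * parabolicCylinderIntegral (1 - s) (√(2 * π) * ω⁻¹ * u))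

lemma cexp_div_cos_eq_kernel (y : ℂ) :
    cexp (-(π * I * (1 / 2 + ω⁻¹ * y) ^ 2) + π * I * (1 / 2 + ω⁻¹ * y)) /
      (2 * I * cos (π * (1 / 2 + ω⁻¹ * y))) = -ω * kernel y := by
  have hinv : ω⁻¹ = -(ω * I) := inv_eq_of_mul_eq_one_right (by
    linear_combination -I * sq_ω - I_sq)
  have hnum : -(π * I * (1 / 2 + ω⁻¹ * y) ^ 2) + π * I * (1 / 2 + ω⁻¹ * y) =
      π * I / 4 + -(π * y ^ 2) := by
    rw [hinv]
    linear_combination -π * y ^ 2 * I ^ 3 * sq_ω - π * y ^ 2 * (I ^ 2 - 1) * I_sq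
  have hcos : cos (π * (1 / 2 + ω⁻¹ * y)) = I * sinh (π * ω * y) := by
    have harg : π * (1 / 2 + ω⁻¹ * y) = π / 2 - π * ω * y * I := by
      rw [hinv]
      ring
    rw [harg, cos_pi_div_two_sub, sin_mul_I, mul_comm]
  have hI : 2 * I * (I * sinh (π * ω * y)) = -(2 * sinh (π * ω * y)) := by
    linear_combination 2 * sinh (π * ω * y) * I_sq
  rw [hnum, hcos, hI, exp_add, kernel, ω, div_neg, neg_mul, mul_div_assoc]

lemma descendingIntegrand_eq (s y : ℂ) :
    descendingIntegrand s (1 / 2 + ω⁻¹ * y) = -ω * ((2 * π) ^ (s / 2) * (Gamma s)⁻¹) *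
      mellin (fun x : ℝ =>
        cexp (-(π * x ^ 2) - π * ω * x) * (cexp (-(2 * π * x * y)) * kernel y)) s := by
  have harg : √(2 * π) * ω * (1 / 2 + ω⁻¹ * y) = √(2 * π) * (ω / 2 + y) := by
    have := ω_ne_zero
    field_simp
  have hmellin : mellin
      (fun x : ℝ => cexp (-(π * x ^ 2) - π * ω * x) * (cexp (-(2 * π * x * y)) * kernel y)) s =
      kernel y * mellin (fun x : ℝ => cexp (-(π * x ^ 2) - 2 * π * (ω / 2 + y) * x)) s := by
    rw [← smul_eq_mul (kernel y), ← mellin_const_smul]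
    congr! 2 with x
    rw [smul_eq_mul, ← mul_assoc, ← exp_add, mul_comm]
    ring_nf
  rw [descendingIntegrand, cexp_div_cos_eq_kernel, harg, parabolicCylinderIntegral_sqrt_mul,
    hmellin]
  ring

lemma cexp_neg_pi_div_four_mul_I : cexp (((-(π / 4) : ℝ) : ℂ) * I) = ω⁻¹ := by
  rw [ω_eq_exp, ← exp_neg, ofReal_neg, neg_mul]

lemma lineInt_neg_pi_div_four (c : ℝ) (f : ℂ → ℂ) :
    lineInt c (-(π / 4)) f =
      ω⁻¹ * ∫ t : ℝ, f (1 / 2 + ω⁻¹ * (t + ((c - 1 / 2) * (√2 / 2) : ℝ) * I)) := by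
  rw [lineInt, cexp_neg_pi_div_four_mul_I, integral_mul_const, mul_comm,
    ← integral_add_right_eq_self _ ((1 / 2 - c) * (√2 / 2))]
  have hshift (t : ℝ) : 1 / 2 + ω⁻¹ * (t + ((c - 1 / 2) * (√2 / 2) : ℝ) * I) =
      c + ω⁻¹ * ((t + (1 / 2 - c) * (√2 / 2) : ℝ) : ℂ) := by
    refine mul_left_cancel₀ ω_ne_zero ?_
    simp only [mul_add ω, mul_inv_cancel_left₀ ω_ne_zero]
    rw [ω_eq_add_mul_I]
    push_cast
    ring
  simp only [hshift]

lemma norm_cexp_mul_cexp_le (x : ℝ) (hx : 0 < x) (t η : ℝ) :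
    ‖cexp (-(π * x ^ 2) - π * ω * x)‖ * ‖cexp (-(2 * π * x * (t + η * I)))‖ *
        Real.exp (-π * t ^ 2) ≤
      Real.exp (-1 * x) * Real.exp (1 - 1 * |t|) := by
  have hre : (-(π * x ^ 2) - π * ω * x : ℂ).re = -(π * x ^ 2) - π * (√2 / 2) * x := by
    simp [re_ω, sq]
  have hre' : (-(2 * π * x * (t + η * I)) : ℂ).re = -(2 * π * x * t) := by simp
  rw [norm_exp, norm_exp, hre, hre', ← Real.exp_add, ← Real.exp_add, ← Real.exp_add]
  refine Real.exp_le_exp.mpr ?_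
  have habs : |t| ≤ |x + t| + x := by
    simpa [abs_of_pos hx] using abs_sub (x + t) x
  have hsq : |x + t| - 1 ≤ π * (x + t) ^ 2 := by
    rw [← sq_abs]
    nlinarith [Real.pi_gt_three, sq_nonneg (|x + t| - 1)]
  linarith [mul_le_mul_of_nonneg_right two_le_pi_mul_sqrt_two_div_two hx.le]

lemma mellin_cexp_mul_mordell {η : ℝ} (hη0 : η ≠ 0) (hη : |η| < √2 / 2) {s : ℂ} (hs : 0 < s.re) :
    mellin (fun x : ℝ => cexp (-(π * x ^ 2) - π * ω * x) * mordell η x) s =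
      ∫ t : ℝ, mellin (fun x : ℝ => cexp (-(π * x ^ 2) - π * ω * x) *
        (cexp (-(2 * π * x * (t + η * I))) * kernel (t + η * I))) s := by
  obtain ⟨C, hC⟩ := exists_norm_kernel_le hη0 hη
  simp only [mordell, ← integral_const_mul]
  refine mellin_integral_comm (b := fun t => |C| * Real.exp (1 - 1 * |t|)) (ε := 1) ?_ ?_
    one_pos ?_ hs
  · have hkernel := (continuous_kernel_horizontal hη0 hη).comp (continuous_snd (X := ℝ))
    refine (Continuous.mul (by fun_prop) (Continuous.mul ?_ hkernel)).continuousOn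
    fun_prop
  · simpa [sub_eq_add_neg, Real.exp_add, neg_mul] using
      (((integrable_exp_neg_mul_abs one_pos).const_mul (Real.exp 1)).const_mul |C|)
  · intro x hx t
    calc ‖cexp (-(π * x ^ 2) - π * ω * x) *
          (cexp (-(2 * π * x * (t + η * I))) * kernel (t + η * I))‖
        ≤ ‖cexp (-(π * x ^ 2) - π * ω * x)‖ * (‖cexp (-(2 * π * x * (t + η * I)))‖ *
            (|C| * Real.exp (-π * t ^ 2))) := by
          rw [norm_mul, norm_mul]
          gcongr
          exact (hC t).trans (by gcongr; exact le_abs_self C)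
      _ = |C| * (‖cexp (-(π * x ^ 2) - π * ω * x)‖ * ‖cexp (-(2 * π * x * (t + η * I)))‖ *
            Real.exp (-π * t ^ 2)) := by ring
      _ ≤ |C| * (Real.exp (-1 * x) * Real.exp (1 - 1 * |t|)) :=
          mul_le_mul_of_nonneg_left (norm_cexp_mul_cexp_le x hx t η) (abs_nonneg C)
      _ = Real.exp (-1 * x) * (|C| * Real.exp (1 - 1 * |t|)) := mul_left_comm _ _ _

theorem lineInt_descendingIntegrand {c : ℝ} (hc : -(1 / 2) < c) (hc' : c < 1 / 2) {s : ℂ}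
    (hs : 0 < s.re) :
    lineInt c (-(π / 4)) (descendingIntegrand s) =
      (2 * π) ^ (s / 2) * (Gamma s)⁻¹ * ω * mellin φ s := by
  have hη : -(√2 / 2) < (c - 1 / 2) * (√2 / 2) := by nlinarith [Real.one_lt_sqrt_two]
  have hη0 : (c - 1 / 2) * (√2 / 2) < 0 := by nlinarith [Real.one_lt_sqrt_two]
  have hφ : mellin (fun x : ℝ => cexp (-(π * x ^ 2) - π * ω * x) *
      mordell ((c - 1 / 2) * (√2 / 2)) x) s = -ω * mellin φ s := by
    rw [← smul_eq_mul (-ω), ← mellin_const_smul]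
    exact setIntegral_congr_fun measurableSet_Ioi fun x hx => by
      simp only [cexp_mul_mordell_ofReal hη hη0 hx, smul_eq_mul]
  rw [lineInt_neg_pi_div_four]
  simp only [descendingIntegrand_eq]
  rw [integral_const_mul, ← mellin_cexp_mul_mordell hη0.ne (abs_lt.mpr ⟨hη, by linarith⟩) hs, hφ]
  have := ω_ne_zero
  field_simp

end LineIntegrals

section Conjugation

lemma conj_ofReal_cpow {x : ℝ} (hx : 0 ≤ x) (s : ℂ) :
    starRingEnd ℂ ((x : ℂ) ^ s) = (x : ℂ) ^ starRingEnd ℂ s := by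
  rw [cpow_conj _ _ (by simpa [arg_ofReal_of_nonneg hx] using Real.pi_ne_zero.symm), conj_ofReal]

lemma conj_mellin (f : ℝ → ℂ) (s : ℂ) :
    starRingEnd ℂ (mellin f s) = mellin (fun x => starRingEnd ℂ (f x)) (starRingEnd ℂ s) := by
  rw [mellin, mellin, ← integral_conj]
  refine setIntegral_congr_fun measurableSet_Ioi fun x hx => ?_
  simp [conj_ofReal_cpow (le_of_lt hx)]

lemma conj_parabolicCylinderIntegral (s z : ℂ) :
    starRingEnd ℂ (parabolicCylinderIntegral s z) =
      parabolicCylinderIntegral (starRingEnd ℂ s) (starRingEnd ℂ z) := by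
  rw [parabolicCylinderIntegral, parabolicCylinderIntegral, ← integral_conj]
  refine setIntegral_congr_fun measurableSet_Ioi fun x hx => ?_
  simp [conj_ofReal_cpow (le_of_lt hx), ← exp_conj, conj_ofNat]

lemma ascendingIntegrand_eq_neg_conj (s u : ℂ) :
    ascendingIntegrand s u =
      -starRingEnd ℂ (descendingIntegrand (1 - starRingEnd ℂ s) (starRingEnd ℂ u)) := by
  simp only [ascendingIntegrand, descendingIntegrand, map_mul, map_div₀, map_inv₀,
    map_add, map_sub, map_neg, map_pow, ← exp_conj, ← cos_conj, ← Gamma_conj,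
    conj_parabolicCylinderIntegral, conj_conj, conj_ofReal, conj_I, conj_ω, map_one, conj_ofNat]
  ring_nf

lemma lineInt_neg_three_pi_div_four (c : ℝ) (s : ℂ) :
    lineInt c (-(3 * π / 4)) (ascendingIntegrand s) =
      starRingEnd ℂ (lineInt c (-(π / 4)) (descendingIntegrand (1 - starRingEnd ℂ s))) := by
  have hdir : cexp (((-(3 * π / 4) : ℝ) : ℂ) * I) = -ω := by
    have harg : ((-(3 * π / 4) : ℝ) : ℂ) * I = π * I / 4 + -(π * I) := by
      push_cast
      ring
    rw [harg, exp_add, exp_neg_pi_mul_I, mul_neg_one, ω]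
  rw [lineInt, lineInt, hdir, cexp_neg_pi_div_four_mul_I, ← integral_conj, ← integral_neg_eq_self]
  congr! 2
  simp [ascendingIntegrand_eq_neg_conj, conj_ω]

theorem lineInt_ascendingIntegrand {c : ℝ} (hc : -(1 / 2) < c) (hc' : c < 1 / 2) {s : ℂ}
    (hs : s.re < 1) :
    lineInt c (-(3 * π / 4)) (ascendingIntegrand s) =
      (2 * π) ^ ((1 - s) / 2) * (Gamma (1 - s))⁻¹ * ω⁻¹ *
        mellin (fun x => starRingEnd ℂ (φ x)) (1 - s) := by
  have hpow : starRingEnd ℂ ((2 * π) ^ ((1 - starRingEnd ℂ s) / 2)) = (2 * π) ^ ((1 - s) / 2) := by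
    simpa [conj_ofNat] using conj_ofReal_cpow Real.two_pi_pos.le ((1 - starRingEnd ℂ s) / 2)
  rw [lineInt_neg_three_pi_div_four, lineInt_descendingIntegrand hc hc' (by simpa using hs)]
  simp [hpow, conj_mellin, ← Gamma_conj, conj_ω]

end Conjugation

section PowerIntegral

/-- The integral `∫ (iy)^{s-1} kernel y dy` over the line `Im y = η`, an entire function of `s`
through which the zeta function is continued. -/
noncomputable def powerIntegral (η : ℝ) (s : ℂ) : ℂ :=
  ∫ t : ℝ, (I * (t + η * I)) ^ (s - 1) * kernel (t + η * I)

lemma mellin_cexp_I_mul_mul {y s : ℂ} (hy : y.im < 0) (hs : 0 < s.re) (a : ℂ) :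
    mellin (fun x : ℝ => cexp (-(2 * π * (I * x) * y)) * a) s =
      (2 * π) ^ (-s) * Gamma s * ((I * y) ^ (-s) * a) := by
  have hne : I * y ≠ 0 := fun h => hy.ne (by simpa using congr_arg re h)
  have hGamma := mellin_cexp_neg_mul (r := (2 * π : ℝ) * (I * y)) (s := s)
    (by simpa using mul_neg_of_pos_of_neg Real.two_pi_pos hy) hs
  have hconst := mellin_const_smul (fun x : ℝ => cexp (-((2 * π : ℝ) * (I * y) * x))) s a
  rw [hGamma, ofReal_mul_cpow Real.two_pi_pos hne] at hconst
  convert hconst using 1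
  · congr 1 with x
    push_cast
    ring_nf
  · push_cast
    ring

theorem mellin_conj_φ {η : ℝ} (hη : -(√2 / 2) < η) (hη0 : η < 0) {s : ℂ} (hs : s.re < 1) :
    mellin (fun x => starRingEnd ℂ (φ x)) (1 - s) =
      -ω⁻¹ * ((2 * π) ^ (s - 1) * Gamma (1 - s) * powerIntegral η s) := by
  have hη_abs : |η| < √2 / 2 := abs_lt.mpr ⟨hη, by linarith⟩
  have hs' : 0 < (1 - s).re := by simpa using hs
  have hφ : mellin (fun x => starRingEnd ℂ (φ x)) (1 - s) =
      -ω⁻¹ * mellin (fun x : ℝ => mordell η (I * x)) (1 - s) := by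
    rw [← smul_eq_mul (-ω⁻¹), ← mellin_const_smul]
    refine setIntegral_congr_fun measurableSet_Ioi fun x hx => ?_
    simp [mordell_I_mul_ofReal hη hη0 hx, ω_ne_zero]
  have hcont : Continuous (Function.uncurry fun x t : ℝ =>
      cexp (-(2 * π * (I * x) * (t + η * I))) * kernel (t + η * I)) := by
    have hkernel := (continuous_kernel_horizontal hη0.ne hη_abs).comp (continuous_snd (X := ℝ))
    refine Continuous.mul ?_ hkernel
    fun_prop
  have hkernel : Integrable fun t : ℝ => ‖kernel (t + η * I)‖ := by
    simpa using (integrable_mordell hη0.ne hη_abs 0).norm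
  have hswap := mellin_integral_comm (ε := -(2 * π * η)) hcont.continuousOn hkernel
    (by nlinarith [Real.pi_pos])
    (fun x _ t => by rw [norm_cexp_I_mul_mul_kernel, neg_neg]) hs'
  rw [hφ]
  simp only [mordell]
  have hmellin (t : ℝ) := mellin_cexp_I_mul_mul (y := t + η * I) (by simpa using hη0) hs'
    (kernel (t + η * I))
  rw [hswap]
  simp only [hmellin, neg_sub]
  rw [integral_const_mul, powerIntegral]

lemma norm_cpow_le_exp_norm_add_norm_inv {z : ℂ} (hz : z ≠ 0) (w : ℂ) :
    ‖z ^ w‖ ≤ Real.exp ((‖z‖ + ‖z‖⁻¹ + π) * ‖w‖) := by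
  have hpos := norm_pos_iff.mpr hz
  have hlog : |Real.log ‖z‖| ≤ ‖z‖ + ‖z‖⁻¹ := by
    have hinv := Real.log_le_self (inv_pos.mpr hpos).le
    rw [Real.log_inv] at hinv
    exact abs_le.mpr ⟨by linarith, by linarith [Real.log_le_self hpos.le, inv_pos.mpr hpos]⟩
  rw [cpow_def_of_ne_zero hz, norm_exp]
  refine Real.exp_le_exp.mpr ((re_le_norm _).trans ?_)
  rw [norm_mul]
  gcongr
  refine (norm_le_abs_re_add_abs_im _).trans ?_
  rw [log_re, log_im]
  exact add_le_add hlog (abs_arg_le_pi z)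

lemma norm_cpow_le_mul_exp_norm (z : ℂ) {w : ℂ} (hw : 0 < w.re) :
    ‖z ^ w‖ ≤ Real.exp (π * |w.im|) * Real.exp (w.re * ‖z‖) := by
  rcases eq_or_ne z 0 with rfl | hz
  · rw [zero_cpow (fun h => by simp [h] at hw), norm_zero]
    positivity
  · rw [cpow_def_of_ne_zero hz, norm_exp, ← Real.exp_add, mul_re, log_re, log_im]
    refine Real.exp_le_exp.mpr ?_
    have hlog := mul_le_mul_of_nonneg_right (Real.log_le_self (norm_nonneg z)) hw.le
    have harg : -(arg z * w.im) ≤ π * |w.im| := by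
      refine (neg_le_abs _).trans ?_
      rw [abs_mul]
      exact mul_le_mul_of_nonneg_right (abs_arg_le_pi z) (abs_nonneg _)
    linarith

lemma differentiable_powerIntegral {η : ℝ} (hη : -(√2 / 2) < η) (hη0 : η < 0) :
    Differentiable ℂ (powerIntegral η) := by
  have hη_abs : |η| < √2 / 2 := abs_lt.mpr ⟨hη, by linarith⟩
  have hre (t : ℝ) : 0 < (I * (t + η * I)).re := by simpa using hη0
  have hne (t : ℝ) : I * (t + η * I) ≠ 0 := fun h => (hre t).ne' (by rw [h, zero_re])
  rw [← differentiableOn_univ]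
  refine differentiableOn_integral_of_locally_dominated isOpen_univ (fun s _ => ?_)
    (Eventually.of_forall fun t => ?_) fun s₀ _ => ?_
  · refine Continuous.aestronglyMeasurable (Continuous.mul ?_
      (continuous_kernel_horizontal hη0.ne hη_abs))
    exact Continuous.cpow (by fun_prop) continuous_const fun t => Or.inl (hre t)
  · exact (((differentiable_id.sub_const 1).const_cpow (Or.inl (hne t))).mul_const
      (kernel (t + η * I))).differentiableOn
  · set R := ‖s₀ - 1‖ + 1
    refine ⟨Metric.ball s₀ 1, Metric.ball_mem_nhds s₀ one_pos,
      fun t : ℝ => Real.exp ((‖(t + η * I : ℂ)‖ + |η|⁻¹ + π) * R) * ‖kernel (t + η * I)‖, ?_,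
      Eventually.of_forall fun t s hs => ?_⟩
    · have hint := integrable_mul_kernel (c := R) (A := Real.exp ((|η|⁻¹ + π) * R))
        (H := fun z => (Real.exp ((‖z‖ + |η|⁻¹ + π) * R) : ℝ)) hη0.ne hη_abs (by fun_prop)
        fun z _ => by
          rw [norm_real, Real.norm_of_nonneg (Real.exp_pos _).le, ← Real.exp_add]
          exact Real.exp_le_exp.mpr (by ring_nf; rfl)
      simpa only [norm_mul, norm_real, Real.norm_of_nonneg (Real.exp_pos _).le] using hint.norm
    · have hexponent : ‖s - 1‖ ≤ R := by
        have := norm_add_le (s₀ - 1) (s - s₀)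
        rw [sub_add_sub_cancel'] at this
        exact this.trans (add_le_add_right (mem_ball_iff_norm.mp hs).le _)
      have hinv : ‖(t + η * I : ℂ)‖⁻¹ ≤ |η|⁻¹ :=
        inv_anti₀ (abs_pos.mpr hη0.ne) (by simpa using abs_im_le_norm (t + η * I : ℂ))
      rw [norm_mul]
      refine mul_le_mul_of_nonneg_right ((norm_cpow_le_exp_norm_add_norm_inv (hne t) _).trans ?_)
        (norm_nonneg _)
      rw [norm_mul, norm_I, one_mul]
      gcongr

lemma cpow_I_mul_ofReal_sub {x : ℝ} (hx : 0 < x) (s : ℂ) :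
    (I * x) ^ (s - 1) - (I * (-x : ℝ)) ^ (s - 1) =
      -2 * I * cos (π * s / 2) * (x : ℂ) ^ (s - 1) := by
  have hI : I ^ (s - 1) = -I * cexp (π * s / 2 * I) := by
    rw [cpow_def_of_ne_zero I_ne_zero, log_I,
      show π / 2 * I * (s - 1) = -π / 2 * I + π * s / 2 * I by ring, exp_add,
      exp_neg_pi_div_two_mul_I]
  have hneg : (-I) ^ (s - 1) = I * cexp (-(π * s / 2) * I) := by
    rw [cpow_def_of_ne_zero (neg_ne_zero.mpr I_ne_zero), log_neg_I,
      show -(π / 2) * I * (s - 1) = π / 2 * I + -(π * s / 2) * I by ring, exp_add,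
      exp_pi_div_two_mul_I]
  rw [mul_comm I, show I * ((-x : ℝ) : ℂ) = x * -I by push_cast; ring,
    ofReal_mul_cpow hx I_ne_zero, ofReal_mul_cpow hx (neg_ne_zero.mpr I_ne_zero), hI, hneg]
  linear_combination I * (x : ℂ) ^ (s - 1) * two_cos (π * s / 2)

section RealLine

variable {s : ℂ} (hs : 2 < s.re)
include hs

lemma cpow_mul_kernel_eq (y : ℂ) :
    (I * y) ^ (s - 1) * kernel y = I * (I * y) ^ (s - 2) * regularKernel y := by
  rcases eq_or_ne y 0 with rfl | hy
  · have hs1 : s - 1 ≠ 0 := fun h => by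
      rw [sub_eq_zero.mp h, one_re] at hs
      linarith
    have hs2 : s - 2 ≠ 0 := fun h => by
      rw [sub_eq_zero.mp h] at hs
      norm_num at hs
    simp [zero_cpow hs1, zero_cpow hs2]
  · rw [regularKernel_of_ne_zero hy, show s - 1 = s - 2 + 1 by ring,
      cpow_add _ _ (mul_ne_zero I_ne_zero hy), cpow_one]
    ring

lemma norm_I_mul_cpow_le (y : ℂ) :
    ‖I * (I * y) ^ (s - 2)‖ ≤ Real.exp (π * |s.im|) * Real.exp ((s.re - 2) * ‖y‖) := by
  have h := norm_cpow_le_mul_exp_norm (I * y) (w := s - 2) (by simpa using hs)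
  simpa using h

lemma continuousAt_I_mul_cpow {y : ℂ} (hy : y.im ≤ 0) :
    ContinuousAt (fun y => I * (I * y) ^ (s - 2)) y :=
  continuousAt_const.mul (ContinuousAt.comp (f := fun y => I * y) (g := fun z => z ^ (s - 2))
    (continuousAt_cpow_const_of_re_pos (Or.inl (by simpa using hy)) (by simpa using hs))
    (by fun_prop))

lemma integrable_cpow_mul_kernel : Integrable fun t : ℝ => (I * t) ^ (s - 1) * kernel t := by
  have hint := integrable_mul_regularKernel (α := 0) (by simp)
    (fun z (hz : z.im = 0) => (continuousAt_I_mul_cpow hs hz.le).continuousWithinAt)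
    fun z _ => norm_I_mul_cpow_le hs z
  simpa [cpow_mul_kernel_eq hs] using hint

lemma mellinConvergent_kernel : MellinConvergent (fun x : ℝ => kernel x) s := by
  refine IntegrableOn.congr_fun
    ((integrable_cpow_mul_kernel hs).integrableOn.const_mul (I ^ (s - 1))⁻¹) (fun x hx => ?_)
    measurableSet_Ioi
  have hI : I ^ (s - 1) ≠ 0 := by simp [cpow_eq_zero_iff]
  simp only [mul_comm I, ofReal_mul_cpow hx I_ne_zero, smul_eq_mul]
  field_simp

lemma powerIntegral_eq_integral_ofReal {η : ℝ} (hη : -(√2 / 2) < η) (hη0 : η < 0) :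
    powerIntegral η s = ∫ t : ℝ, (I * t) ^ (s - 1) * kernel t := by
  have him {z : ℂ} (hz : z.im ∈ uIcc η 0) : z.im ≤ 0 := (uIcc_of_le hη0.le ▸ hz).2
  have hshift := integral_mul_regularKernel_shift (β := 0) (abs_lt.mpr ⟨hη, by linarith⟩)
    (by simp) (fun z hz => (continuousAt_I_mul_cpow hs (him hz)).continuousWithinAt)
    (fun z hz => by
      have hz : z.im < 0 := max_eq_right hη0.le ▸ hz.2
      have hslit : I * z ∈ slitPlane := Or.inl (by simpa using hz)
      exact (((differentiableAt_id.const_mul I).cpow_const hslit).const_mul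
        I).differentiableWithinAt)
    fun z _ => norm_I_mul_cpow_le hs z
  simpa [powerIntegral, cpow_mul_kernel_eq hs] using hshift

theorem powerIntegral_eq_mellin_kernel {η : ℝ} (hη : -(√2 / 2) < η) (hη0 : η < 0) :
    powerIntegral η s = -2 * I * cos (π * s / 2) * mellin (fun x : ℝ => kernel x) s := by
  have hint := integrable_cpow_mul_kernel hs
  rw [powerIntegral_eq_integral_ofReal hs hη hη0,
    ← intervalIntegral.integral_Iic_add_Ioi (b := 0) hint.integrableOn hint.integrableOn]
  have hneg := integral_comp_neg_Ioi 0 fun t : ℝ => (I * t) ^ (s - 1) * kernel t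
  rw [neg_zero] at hneg
  rw [← hneg, ← integral_add hint.comp_neg.integrableOn hint.integrableOn, mellin,
    ← integral_const_mul]
  refine setIntegral_congr_fun measurableSet_Ioi fun x hx => ?_
  simp only [ofReal_neg, kernel_neg, smul_eq_mul]
  have := cpow_I_mul_ofReal_sub hx s
  rw [ofReal_neg] at this
  linear_combination kernel x * this

end RealLine

end PowerIntegral

section Continuation

lemma isPreconnected_re_pos_diff_one : IsPreconnected ({s : ℂ | 0 < s.re} \ {1}) := by
  have hright := (convex_halfSpace_re_gt 0).inter (convex_halfSpace_im_gt 0)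
  have hleft := (convex_halfSpace_re_gt 0).inter (convex_halfSpace_im_lt 0)
  have hstrip := (convex_halfSpace_re_gt 0).inter (convex_halfSpace_re_lt 1)
  have hunion := ((((convex_halfSpace_re_gt 1).isPreconnected.union (2 + I) (by norm_num)
    (by norm_num) hright.isPreconnected).union (2 - I) (by norm_num) (by norm_num)
    hleft.isPreconnected).union (1 / 2 + I) (by norm_num) (by norm_num) hstrip.isPreconnected)
  convert hunion using 1
  ext s
  have hone : s ≠ 1 ↔ s.re ≠ 1 ∨ s.im ≠ 0 := by simp [Complex.ext_iff, imp_iff_not_or]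
  simp only [Set.mem_sdiff, mem_ofPred_eq, mem_singleton_iff, mem_union, mem_inter_iff,
    hone]
  grind

lemma ne_neg_natCast {s : ℂ} (hs : 0 < s.re) (n : ℕ) : s ≠ -n := by
  rintro rfl
  simp only [neg_re, natCast_re, Left.neg_pos_iff] at hs
  exact (Nat.cast_nonneg n).not_gt hs

variable {η : ℝ} (hη : -(√2 / 2) < η) (hη0 : η < 0) {s : ℂ}

lemma mellin_φ_add_mellin_kernel (hs : 2 < s.re) :
    mellin φ s + mellin (fun x : ℝ => kernel x) s =
      (2 * π * ω) ^ (-s) * (Gamma s * riemannZeta s) := by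
  have hre : 0 < (2 * π * ω).re := by
    have : (2 * π * ω).re = 2 * π * (√2 / 2) := by simp [re_ω]
    rw [this]
    positivity
  rw [← mellin_inv_cexp_mul_sub_one hre (by linarith),
    ← (hasMellin_add (mellinConvergent_φ (by linarith)) (mellinConvergent_kernel hs)).2]
  simp only [φ, sub_add_cancel]

include hη hη0

theorem two_mul_cos_mul_zeta_sub_mellin_φ (hs : 0 < s.re) (hs1 : s ≠ 1) :
    2 * cos (π * s / 2) * ((2 * π * ω) ^ (-s) * (Gamma s * riemannZeta s) - mellin φ s) =
      I * powerIntegral η s := by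
  have hopen : IsOpen ({s : ℂ | 0 < s.re} \ {1}) :=
    (isOpen_lt continuous_const continuous_re).sdiff isClosed_singleton
  have hbase : 2 * π * ω ≠ 0 := mul_ne_zero (by simp [Real.pi_ne_zero]) ω_ne_zero
  have hleft : DifferentiableOn ℂ (fun s => 2 * cos (π * s / 2) *
      ((2 * π * ω) ^ (-s) * (Gamma s * riemannZeta s) - mellin φ s))
      ({s : ℂ | 0 < s.re} \ {1}) := fun s hs =>
    have hGamma : DifferentiableAt ℂ Gamma s := differentiableAt_Gamma s (ne_neg_natCast hs.1)
    have hzeta := differentiableAt_riemannZeta hs.2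
    have hpow : DifferentiableAt ℂ (fun s => (2 * π * ω) ^ (-s)) s :=
      differentiableAt_id.neg.const_cpow (Or.inl hbase)
    DifferentiableAt.differentiableWithinAt <| DifferentiableAt.mul (by fun_prop)
      ((hpow.mul (hGamma.mul hzeta)).sub (differentiableAt_mellin_φ hs.1))
  have hright : Differentiable ℂ fun s => I * powerIntegral η s :=
    (differentiable_powerIntegral hη hη0).const_mul I
  refine (hleft.analyticOnNhd hopen).eqOn_of_preconnected_of_eventuallyEq
    (hright.differentiableOn.analyticOnNhd hopen) isPreconnected_re_pos_diff_one (z₀ := 3)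
    (by norm_num) ?_ ⟨hs, hs1⟩
  filter_upwards [(isOpen_lt continuous_const continuous_re).mem_nhds
    (show (2 : ℝ) < (3 : ℂ).re by norm_num)] with s hs
  rw [← mellin_φ_add_mellin_kernel hs, powerIntegral_eq_mellin_kernel hs hη hη0]
  linear_combination 2 * cos (π * s / 2) * mellin (fun x : ℝ => kernel x) s * I_sq

omit hη hη0

lemma ω_cpow (s : ℂ) : ω ^ s = cexp (π * I * s / 4) := by
  have hlog : log ω = π * I / 4 := by
    rw [ω, log_exp] <;> simp <;> linarith [Real.pi_pos]
  rw [cpow_def_of_ne_zero ω_ne_zero, hlog]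
  ring_nf

lemma Gammaℝ_eq_mul_Gammaℝ_one_sub (hs₀ : 0 < s.re) (hs₁ : s.re < 1) :
    Gammaℝ s = Gammaℝ (1 - s) * (2 * (2 * π) ^ (-s) * Gamma s * cos (π * s / 2)) := by
  have hne : Gammaℝ s ≠ 0 := Gammaℝ_ne_zero_of_re_pos hs₀
  have hne' : Gammaℝ (1 - s) ≠ 0 := Gammaℝ_ne_zero_of_re_pos (by simpa using hs₁)
  have h := inv_Gammaℝ_one_sub (ne_neg_natCast hs₀)
  rw [Gammaℂ_def] at h
  field_simp at h
  rw [h]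
  ring_nf

lemma mul_mellin_conj_φ_eq_mul_powerIntegral (hη : -(√2 / 2) < η) (hη0 : η < 0) (hs : s.re < 1) :
    (2 * π) ^ (1 - s) * cexp (-(π * I * (1 - s) / 4)) * (Gamma (1 - s))⁻¹ *
        mellin (fun x => starRingEnd ℂ (φ x)) (1 - s) =
      cexp (π * I * s / 4) * (I * powerIntegral η s) := by
  have hpow : (2 * π : ℂ) ^ (1 - s) * (2 * π) ^ (s - 1) = 1 := by
    rw [← cpow_add _ _ (by simp [Real.pi_ne_zero]), sub_add_sub_cancel', sub_self, cpow_zero]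
  have hexp : cexp (-(π * I * (1 - s) / 4)) * ω⁻¹ = -I * cexp (π * I * s / 4) := by
    rw [← exp_neg_pi_div_two_mul_I, ω, ← exp_neg, ← exp_add, ← exp_add]
    ring_nf
  have hGamma : Gamma (1 - s) ≠ 0 := Gamma_ne_zero_of_re_pos (by simpa using hs)
  rw [mellin_conj_φ hη hη0 hs]
  calc
    _ = -(((2 * π) ^ (1 - s) * (2 * π) ^ (s - 1)) * (cexp (-(π * I * (1 - s) / 4)) * ω⁻¹) *
        ((Gamma (1 - s))⁻¹ * Gamma (1 - s)) * powerIntegral η s) := by ring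
    _ = _ := by
      rw [hpow, hexp, inv_mul_cancel₀ hGamma]
      ring

theorem Gammaℝ_mul_riemannZeta_eq (hs₀ : 0 < s.re) (hs₁ : s.re < 1) :
    Gammaℝ s * riemannZeta s =
      Gammaℝ s * ((2 * π) ^ s * cexp (π * I * s / 4) * (Gamma s)⁻¹ * mellin φ s) +
      Gammaℝ (1 - s) * ((2 * π) ^ (1 - s) * cexp (-(π * I * (1 - s) / 4)) * (Gamma (1 - s))⁻¹ *
        mellin (fun x => starRingEnd ℂ (φ x)) (1 - s)) := by
  have hη : -(√2 / 2) < -(1 / 2 : ℝ) := by linarith [Real.one_lt_sqrt_two]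
  have hη0 : -(1 / 2 : ℝ) < 0 := by norm_num
  have hs1 : s ≠ 1 := fun h => by simp [h] at hs₁
  have : (2 * π : ℂ) ≠ 0 := by simp [Real.pi_ne_zero]
  have hGamma : Gamma s ≠ 0 := Gamma_ne_zero_of_re_pos hs₀
  have hpow : (2 * π * ω) ^ (-s) = ((2 * π : ℂ) ^ s)⁻¹ * (cexp (π * I * s / 4))⁻¹ := by
    have h := ofReal_mul_cpow Real.two_pi_pos ω_ne_zero (-s)
    push_cast at h
    rw [h, cpow_neg, cpow_neg, ω_cpow]
  rw [mul_mellin_conj_φ_eq_mul_powerIntegral hη hη0 hs₁,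
    ← two_mul_cos_mul_zeta_sub_mellin_φ hη hη0 hs₀ hs1,
    Gammaℝ_eq_mul_Gammaℝ_one_sub hs₀ hs₁, hpow, cpow_neg]
  field_simp
  ring

lemma two_cpow_half_mul_two_pi_cpow_half (s : ℂ) :
    (2 : ℂ) ^ (s / 2) * (2 * π) ^ (s / 2) = π ^ (-s / 2) * (2 * π) ^ s := by
  have hπ : (π : ℂ) ≠ 0 := ofReal_ne_zero.mpr Real.pi_ne_zero
  have hmul (w : ℂ) : (2 * π : ℂ) ^ w = 2 ^ w * π ^ w := by
    simpa using ofReal_mul_cpow two_pos hπ w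
  rw [hmul, hmul, ← mul_assoc, mul_left_comm, ← cpow_add _ _ two_ne_zero, ← cpow_add _ _ hπ]
  ring_nf

lemma cexp_mul_ω (s : ℂ) : cexp (-(π * I * (1 - s) / 4)) * ω = cexp (π * I * s / 4) := by
  rw [ω, ← exp_add]
  ring_nf

lemma mul_lineInt_descendingIntegrand {c : ℝ} (hc : -(1 / 2) < c) (hc' : c < 1 / 2)
    (hs : 0 < s.re) :
    2 ^ (s / 2) * Gamma (s / 2) * cexp (-(π * I * (1 - s) / 4)) *
        lineInt c (-(π / 4)) (descendingIntegrand s) =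
      Gammaℝ s * ((2 * π) ^ s * cexp (π * I * s / 4) * (Gamma s)⁻¹ * mellin φ s) := by
  rw [lineInt_descendingIntegrand hc hc' hs, Gammaℝ_def, ← cexp_mul_ω]
  linear_combination Gamma (s / 2) * cexp (-(π * I * (1 - s) / 4)) * ω * (Gamma s)⁻¹ *
    mellin φ s * two_cpow_half_mul_two_pi_cpow_half s

lemma mul_lineInt_ascendingIntegrand {c : ℝ} (hc : -(1 / 2) < c) (hc' : c < 1 / 2)
    (hs : s.re < 1) :
    2 ^ ((1 - s) / 2) * Gamma ((1 - s) / 2) * cexp (π * I * s / 4) *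
        lineInt c (-(3 * π / 4)) (ascendingIntegrand s) =
      Gammaℝ (1 - s) * ((2 * π) ^ (1 - s) * cexp (-(π * I * (1 - s) / 4)) * (Gamma (1 - s))⁻¹ *
        mellin (fun x => starRingEnd ℂ (φ x)) (1 - s)) := by
  rw [lineInt_ascendingIntegrand hc hc' hs, Gammaℝ_def, ← cexp_mul_ω]
  linear_combination Gamma ((1 - s) / 2) * cexp (-(π * I * (1 - s) / 4)) * (Gamma (1 - s))⁻¹ *
    mellin (fun x => starRingEnd ℂ (φ x)) (1 - s) * (two_cpow_half_mul_two_pi_cpow_half (1 - s) +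
      2 ^ ((1 - s) / 2) * (2 * π) ^ ((1 - s) / 2) * mul_inv_cancel₀ ω_ne_zero)

end Continuation

end RiemannSiegel

/-- The Riemann–Siegel integral formula with both integrals written via the real
integral representation of the parabolic cylinder functions
`U(s - 1/2, √(2π) e^{iπ/4} u)` and `U(1/2 - s, √(2π) e^{-iπ/4} u)`. -/
theorem riemann_siegel_integral_formula (s : ℂ) (hs₀ : 0 < s.re) (hs₁ : s.re < 1)
    (c c' : ℝ) (hc : -(1/2) < c) (hc' : c < 1/2) (hc₁ : -(1/2) < c') (hc₂ : c' < 1/2) :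
    (π : ℂ) ^ (-s / 2) * Complex.Gamma (s / 2) * riemannZeta s =
    (2 : ℂ) ^ (s / 2) * Complex.Gamma (s / 2) *
        Complex.exp (-((π : ℂ) * Complex.I * (1 - s) / 4)) *
      lineInt c (-(π/4)) (fun u =>
        Complex.exp (-((π : ℂ) * Complex.I * u ^ 2) + (π : ℂ) * Complex.I * u) /
          (2 * Complex.I * Complex.cos ((π : ℂ) * u)) *
        ((Complex.Gamma s)⁻¹ *
          ∫ w in Set.Ioi (0 : ℝ),
            Complex.exp (-((w : ℂ) ^ 2 / 2) -
                (Real.sqrt (2 * π) : ℂ) * Complex.exp ((π : ℂ) * Complex.I / 4) * u * (w : ℂ)) *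
              (w : ℂ) ^ (s - 1))) +
    (2 : ℂ) ^ ((1 - s) / 2) * Complex.Gamma ((1 - s) / 2) *
        Complex.exp ((π : ℂ) * Complex.I * s / 4) *
      lineInt c' (-(3 * π / 4)) (fun u =>
        Complex.exp ((π : ℂ) * Complex.I * u ^ 2 - (π : ℂ) * Complex.I * u) /
          (2 * Complex.I * Complex.cos ((π : ℂ) * u)) *
        ((Complex.Gamma (1 - s))⁻¹ *
          ∫ w in Set.Ioi (0 : ℝ),
            Complex.exp (-((w : ℂ) ^ 2 / 2) -
                (Real.sqrt (2 * π) : ℂ) * Complex.exp (-((π : ℂ) * Complex.I / 4)) * u * (w : ℂ)) *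
              (w : ℂ) ^ (-s))) := by
  have hasc : (fun u => cexp (π * I * u ^ 2 - π * I * u) / (2 * I * cos (π * u)) *
      ((Gamma (1 - s))⁻¹ * ∫ w in Ioi (0 : ℝ), cexp (-((w : ℂ) ^ 2 / 2) -
        √(2 * π) * cexp (-(π * I / 4)) * u * w) * (w : ℂ) ^ (-s))) =
      RiemannSiegel.ascendingIntegrand s := by
    ext u
    rw [RiemannSiegel.ascendingIntegrand, RiemannSiegel.parabolicCylinderIntegral,
      RiemannSiegel.ω, ← exp_neg, sub_sub_cancel_left]
  rw [hasc]
  refine Eq.trans ?_ (congrArg₂ (· + ·)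
    (RiemannSiegel.mul_lineInt_descendingIntegrand hc hc' hs₀)
    (RiemannSiegel.mul_lineInt_ascendingIntegrand hc₁ hc₂ hs₁)).symm
  rw [← Gammaℝ_def]
  exact RiemannSiegel.Gammaℝ_mul_riemannZeta_eq hs₀ hs₁
end

section
/- Let s be a complex number with Re(s) > 1. Then ∫_{0 ↗ 1} (e^{iπu²}·u^{-s}/(e^{iπu} - e^{-iπu})) du = (2π)^{s/2}·e^{iπ(s+1)/4}·(1/Γ(s))·∫_{-1/2 ↘ 1/2} (e^{-iπu²}/(e^{-2πiu} + 1))·(∫_0^∞ e^{-w²/2 - √(2π)·e^{iπ/4}·u·w}·w^{s-1} dw) du. (The inner integral over w equals Γ(s)·e^{iπu²/2}·U(s-1/2, √(2π)e^{iπ/4}u), where U is the parabolic cylinder function, so this is the representation F(s) = 2^{s/2}Γ(s/2)e^{-iπ(1-s)/4}·∫_{-1/2 ↘ 1/2} (e^{-iπu²/2 + iπu}/(2i cos(πu)))·U(s-1/2, √(2π)e^{iπ/4}u) du after multiplying both sides by π^{-s/2}Γ(s/2) and reversing the orientation of the path on the left.) -/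
/-!
Write `u ^ (-s)` as a Mellin integral over `w > 0` of exponentials `e^{-λuw}`, where `λ² = 2πi`, and
interchange the integrations. For each `w` this leaves the Mordell integral of
`e^{πiu² - 2πiku} / (e^{πiu} - e^{-πiu})` with `k = w / λ`. Its numerator is the Gaussian integral
`e^{πi/4} ∫_{-1/2 ↘ 1/2} e^{-πi(z + k)²} e^{2πiuz} dz`, so a second interchange leaves
`∫_{0 ↗ 1} e^{2πiuz} / (e^{πiu} - e^{-πiu}) du`. Moving this line one period to the left across the
pole `u = 0` multiplies the integral by `-e^{-2πiz}` and picks up the residue, whence its value is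
`1 / (e^{-2πiz} + 1)`. Interchanging `z` and `w` again gives the right-hand side, as
`πi(z + w / λ)² = πiz² + w² / 2 + λzw`.
-/

open scoped Real
open MeasureTheory Set Complex

open Filter
open scoped Interval Topology

/-- The parametrization of the path of integration in `lineInt c θ`. -/
noncomputable def slantedLine (c θ t : ℝ) : ℂ := c + exp (θ * I) * t

/-- The closed region swept by the lines `slantedLine x θ` as `x` runs from `a` to `b`. -/
def slantedStrip (θ a b : ℝ) : Set ℂ := {u | ∃ x ∈ Icc a b, ∃ t, slantedLine x θ t = u}

section SlantedLine

variable {c c' θ θ' : ℝ}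

@[simp] lemma slantedLine_re (c θ t : ℝ) : (slantedLine c θ t).re = c + Real.cos θ * t := by
  simp [slantedLine]

@[simp] lemma slantedLine_im (c θ t : ℝ) : (slantedLine c θ t).im = Real.sin θ * t := by
  simp [slantedLine]

@[fun_prop] lemma continuous_slantedLine (c θ : ℝ) : Continuous (slantedLine c θ) := by
  unfold slantedLine; fun_prop

lemma slantedLine_add_ofReal (c θ t x : ℝ) :
    slantedLine c θ t + x = slantedLine (c + x) θ t := by
  simp only [slantedLine, ofReal_add]; ring

lemma slantedLine_ne_ofReal (hθ : Real.sin θ ≠ 0) {x : ℝ} (hx : c ≠ x) (t : ℝ) :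
    slantedLine c θ t ≠ x := by
  intro h
  have him : Real.sin θ * t = 0 := by simpa using congrArg im h
  have hre : c + Real.cos θ * t = x := by simpa using congrArg re h
  obtain rfl : t = 0 := (mul_eq_zero.1 him).resolve_left hθ
  exact hx (by simpa using hre)

lemma lineInt_congr {f g : ℂ → ℂ} (h : ∀ t, f (slantedLine c θ t) = g (slantedLine c θ t)) :
    lineInt c θ f = lineInt c θ g :=
  integral_congr_ae (.of_forall fun t => congrArg (· * exp (θ * I)) (h t))

lemma lineInt_const_mul (a : ℂ) (f : ℂ → ℂ) :
    lineInt c θ (fun u => a * f u) = a * lineInt c θ f := by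
  simp only [lineInt, mul_assoc, integral_const_mul]

lemma lineInt_mul_const (a : ℂ) (f : ℂ → ℂ) :
    lineInt c θ (fun u => f u * a) = lineInt c θ f * a := by
  simp only [mul_comm _ a, lineInt_const_mul]

lemma lineInt_integral_swap {α : Type*} [MeasurableSpace α] {μ : Measure α} [SFinite μ]
    {f : ℂ → α → ℂ}
    (hf : Integrable (fun p : ℝ × α => f (slantedLine c θ p.1) p.2) (volume.prod μ)) :
    lineInt c θ (fun u => ∫ a, f u a ∂μ) = ∫ a, lineInt c θ (fun u => f u a) ∂μ := by
  simp only [lineInt, ← integral_mul_const]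
  exact integral_integral_swap (hf.mul_const (exp (θ * I)))

lemma lineInt_lineInt_swap {f : ℂ → ℂ → ℂ}
    (hf : Integrable fun p : ℝ × ℝ => f (slantedLine c θ p.1) (slantedLine c' θ' p.2)) :
    lineInt c θ (fun u => lineInt c' θ' fun z => f u z) =
      lineInt c' θ' (fun z => lineInt c θ fun u => f u z) := by
  refine (lineInt_integral_swap (f := fun u x => f u (slantedLine c' θ' x) * exp (θ' * I))
    (hf.mul_const _)).trans ?_
  simp only [lineInt_mul_const]
  rfl

end SlantedLine

section Trigonometric

lemma abs_sinh_im_le_norm_sin (z : ℂ) : |Real.sinh z.im| ≤ ‖sin z‖ := by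
  rw [← sq_le_sq₀ (abs_nonneg _) (norm_nonneg _), sq_abs, Complex.sq_norm, normSq_apply, sin_eq]
  simp only [← ofReal_sin, ← ofReal_cos, ← ofReal_sinh, ← ofReal_cosh, ← ofReal_mul, add_re,
    add_im, re_ofReal_mul, im_ofReal_mul, ofReal_re, ofReal_im, I_re, I_im]
  nlinarith [Real.sin_sq_add_cos_sq z.re, Real.cosh_sq z.im, sq_nonneg (Real.sin z.re)]

lemma exp_abs_im_le_four_mul_norm_sin {z : ℂ} (hz : 1 ≤ |z.im|) :
    Real.exp |z.im| ≤ 4 * ‖sin z‖ := by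
  have hsinh := abs_sinh_im_le_norm_sin z
  rw [Real.abs_sinh, Real.sinh_eq] at hsinh
  have hexp : 2 ≤ Real.exp |z.im| := by linarith [Real.add_one_le_exp |z.im|]
  have hexp_neg : Real.exp (-|z.im|) ≤ 1 := Real.exp_le_one_iff.2 (by linarith)
  linarith

lemma sin_pi_mul_eq_zero_iff {u : ℂ} : sin (π * u) = 0 ↔ ∃ n : ℤ, u = n := by
  have hπ : (π : ℂ) ≠ 0 := ofReal_ne_zero.2 Real.pi_ne_zero
  simp only [sin_eq_zero_iff, mul_comm _ (π : ℂ), mul_right_inj' hπ]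

lemma exp_sub_exp_neg_eq_sin (u : ℂ) :
    exp (π * I * u) - exp (-(π * I * u)) = 2 * I * sin (π * u) := by
  rw [mul_right_comm, mul_assoc 2 I, mul_left_comm, two_sin, ← neg_mul]
  linear_combination (exp (π * u * I) - exp (-(π * u) * I)) * I_sq

lemma exp_neg_add_one_eq_sin (z : ℂ) :
    exp (-(2 * π * I * z)) + 1 = 2 * exp (-(π * I * z)) * sin (π * (z + (1 / 2 : ℝ))) := by
  have hcos : sin (π * (z + (1 / 2 : ℝ))) = cos (π * z) := by
    rw [← sin_add_pi_div_two]; push_cast; ring_nf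
  have hexp : exp (-(2 * π * I * z)) = exp (-(π * I * z)) * exp (-(π * z) * I) := by
    rw [← exp_add]; ring_nf
  have hone : exp (-(π * I * z)) * exp (π * z * I) = 1 := by
    rw [← exp_add, ← exp_zero]; ring_nf
  rw [hcos, hexp]
  linear_combination -exp (-(π * I * z)) * two_cos (π * z) - hone

variable {c θ : ℝ}

lemma ne_intCast_of_pos_of_lt_one (h₀ : 0 < c) (h₁ : c < 1) (n : ℤ) : c ≠ n := by
  rintro rfl
  have h₀' : 0 < n := mod_cast h₀
  have h₁' : n < 1 := mod_cast h₁
  lia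

lemma sin_pi_mul_slantedLine_ne_zero (hc : ∀ n : ℤ, c ≠ n) (hθ : Real.sin θ ≠ 0) (t : ℝ) :
    sin (π * slantedLine c θ t) ≠ 0 := by
  rw [Ne, sin_pi_mul_eq_zero_iff]
  rintro ⟨n, hn⟩
  exact slantedLine_ne_ofReal hθ (hc n) t (by simpa using hn)

lemma exists_exp_le_mul_norm_sin_slantedLine (hc : ∀ n : ℤ, c ≠ n) (hθ : Real.sin θ ≠ 0) :
    ∃ C, ∀ t, Real.exp (π * |(slantedLine c θ t).im|) ≤
      C * ‖sin (π * slantedLine c θ t)‖ := by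
  have hsin := sin_pi_mul_slantedLine_ne_zero hc hθ
  let K : Set ℝ := {t | |π * (slantedLine c θ t).im| ≤ 1}
  have hK : IsCompact K := by
    have hle : K ⊆ Metric.closedBall 0 (1 / (π * |Real.sin θ|)) := fun t ht => by
      rw [mem_closedBall_zero_iff, Real.norm_eq_abs, le_div_iff₀' (by positivity)]
      simpa [K, abs_mul, abs_of_pos Real.pi_pos, mul_assoc] using ht
    exact (isCompact_closedBall _ _).of_isClosed_subset
      (isClosed_le (by fun_prop) continuous_const) hle
  obtain ⟨C, hC⟩ := hK.exists_bound_of_continuousOn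
    (f := fun t => Real.exp (π * |(slantedLine c θ t).im|) / ‖sin (π * slantedLine c θ t)‖)
    (Continuous.continuousOn (by fun_prop (disch := simpa using hsin)))
  refine ⟨max C 4, fun t => ?_⟩
  by_cases ht : t ∈ K
  · rw [← div_le_iff₀ (norm_pos_iff.2 (hsin t))]
    exact (le_abs_self _).trans ((hC t ht).trans (le_max_left _ _))
  · have him : (π * slantedLine c θ t).im = π * (slantedLine c θ t).im := im_ofReal_mul _ _
    have h1 : 1 ≤ |(π * slantedLine c θ t).im| := him ▸ (not_le.1 ht).le
    have h4 := exp_abs_im_le_four_mul_norm_sin h1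
    rw [him, abs_mul, abs_of_pos Real.pi_pos] at h4
    exact h4.trans (by gcongr; exact le_max_right _ _)

end Trigonometric

section Residue

lemma exists_differentiableOn_eq_sub_div {s : Set ℂ} {p r : ℂ} {F : ℂ → ℂ} (hs : s ∈ 𝓝 p)
    (hF : DifferentiableOn ℂ F (s \ {p}))
    (hr : Tendsto (fun z => (z - p) * F z) (𝓝[≠] p) (𝓝 r)) :
    ∃ H : ℂ → ℂ, DifferentiableOn ℂ H s ∧ ∀ z ≠ p, H z = F z - r / (z - p) := by
  let g : ℂ → ℂ := Function.update (fun z => (z - p) * F z) p r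
  have hg_ne : ∀ z ≠ p, g z = (z - p) * F z := fun z hz => Function.update_of_ne hz _ _
  have hg : DifferentiableOn ℂ g s :=
    (differentiableOn_compl_singleton_and_continuousAt_iff hs).1
      ⟨(((differentiable_id.sub_const p).differentiableOn.mul hF).congr
        fun z hz => hg_ne z hz.2), continuousAt_update_same.2 hr⟩
  refine ⟨dslope g p, (differentiableOn_dslope hs).2 hg, fun z hz => ?_⟩
  rw [dslope_of_ne _ hz, slope_def_field, hg_ne z hz, sub_div,
    mul_div_cancel_left₀ _ (sub_ne_zero.2 hz)]
  simp [g]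

variable {a b : ℝ} {F : ℂ → ℂ}

lemma tendsto_intervalIntegral_vertical
    (hF : Tendsto F (cocompact ℂ ⊓ 𝓟 (im ⁻¹' [[a, b]])) (𝓝 0)) :
    Tendsto (fun x : ℝ => ∫ y in a..b, F (x + y * I)) (cocompact ℝ) (𝓝 0) := by
  have hline : Tendsto (fun p : ℝ × ℝ => (p.1 + p.2 * I : ℂ)) (cocompact ℝ ×ˢ 𝓟 [[a, b]])
      (cocompact ℂ ⊓ 𝓟 (im ⁻¹' [[a, b]])) := by
    refine tendsto_inf.2 ⟨?_, tendsto_principal.2 ?_⟩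
    · have hre : Tendsto (fun p : ℝ × ℝ => ‖p.1‖) (cocompact ℝ ×ˢ 𝓟 [[a, b]]) atTop :=
        tendsto_norm_cocompact_atTop.comp tendsto_fst
      rw [← Metric.cobounded_eq_cocompact (α := ℂ), ← tendsto_norm_atTop_iff_cobounded]
      exact tendsto_atTop_mono (fun p => by simpa using abs_re_le_norm (p.1 + p.2 * I)) hre
    · filter_upwards [prod_mem_prod univ_mem (mem_principal_self _)] with p hp
      simpa using hp.2
  refine Metric.tendsto_nhds.2 fun ε hε => ?_
  have hδ : 0 < ε / (|b - a| + 1) := by positivity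
  have hsmall := (hF.comp hline).eventually (Metric.ball_mem_nhds 0 hδ)
  filter_upwards [eventually_prod_principal_iff.1 hsmall] with x hx
  have hbound : ∀ y ∈ Ι a b, ‖F (x + y * I)‖ ≤ ε / (|b - a| + 1) := fun y hy => by
    simpa using (mem_ball_zero_iff.1 (hx y (uIoc_subset_uIcc hy))).le
  rw [dist_zero_right]
  calc _ ≤ ε / (|b - a| + 1) * |b - a| := intervalIntegral.norm_integral_le_of_norm_le_const hbound
    _ < ε / (|b - a| + 1) * (|b - a| + 1) := by gcongr; exact lt_add_one _
    _ = ε := div_mul_cancel₀ _ (by positivity)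

lemma tendsto_intervalIntegral_horizontal_sub (hd : DifferentiableOn ℂ F (im ⁻¹' [[a, b]]))
    (hF : Tendsto F (cocompact ℂ ⊓ 𝓟 (im ⁻¹' [[a, b]])) (𝓝 0)) :
    Tendsto (fun T : ℝ => (∫ x in -T..T, F (x + a * I)) - ∫ x in -T..T, F (x + b * I)) atTop
      (𝓝 0) := by
  have hvert := tendsto_intervalIntegral_vertical hF
  have hright := hvert.mono_left (atTop_le_cocompact (α := ℝ))
  have hleft := (hvert.mono_left (atBot_le_cocompact (α := ℝ))).comp tendsto_neg_atTop_atBot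
  have hsides := (hleft.sub hright).const_mul I
  rw [sub_zero, mul_zero] at hsides
  refine hsides.congr fun T => ?_
  have hrect := integral_boundary_rect_eq_zero_of_differentiableOn F (-T + a * I) (T + b * I)
    (hd.mono fun z hz => by simpa using hz.2)
  simp only [add_re, neg_re, ofReal_re, mul_re, I_re, mul_zero, ofReal_im, I_im, mul_one,
    sub_self, add_zero, add_im, neg_im, neg_zero, mul_im, zero_add, smul_eq_mul] at hrect
  simp only [Function.comp_apply]
  linear_combination -hrect

lemma intervalIntegral_inv_add_mul_I {β : ℝ} (hβ : β ≠ 0) (T : ℝ) :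
    ∫ x in -T..T, (x + β * I : ℂ)⁻¹ = -(2 * Real.arctan (T / β) : ℝ) * I := by
  have hne : ∀ x : ℝ, (x + β * I : ℂ) ≠ 0 := fun x h => hβ (by simpa using congrArg im h)
  have hcont : Continuous fun x : ℝ => (x + β * I : ℂ)⁻¹ := by fun_prop (disch := exact hne)
  have hflip : ∫ x in -T..T, ((-x : ℝ) + β * I : ℂ)⁻¹ = ∫ x in -T..T, (x + β * I : ℂ)⁻¹ := by
    rw [intervalIntegral.integral_comp_neg fun x : ℝ => (x + β * I : ℂ)⁻¹, neg_neg]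
  have heven : ∀ x : ℝ, (x + β * I : ℂ)⁻¹ + ((-x : ℝ) + β * I : ℂ)⁻¹ =
      (-2 * I) * (β / (β ^ 2 + x ^ 2) : ℝ) := fun x => by
    have hsq : (β ^ 2 + x ^ 2 : ℂ) ≠ 0 := mod_cast (by positivity : β ^ 2 + x ^ 2 ≠ 0)
    rw [inv_add_inv (hne x) (hne (-x)), div_eq_iff (mul_ne_zero (hne x) (hne (-x)))]
    push_cast
    field_simp
    linear_combination (2 * β ^ 3 * I) * I_sq
  have hadd := intervalIntegral.integral_add (μ := volume) (hcont.intervalIntegrable (-T) T)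
    ((hcont.comp continuous_neg).intervalIntegrable (-T) T)
  simp only [Function.comp_apply, heven, hflip, intervalIntegral.integral_const_mul,
    intervalIntegral.integral_ofReal, integral_div_sq_add_sq, neg_div, Real.arctan_neg] at hadd
  push_cast at hadd ⊢
  linear_combination -hadd / 2

lemma tendsto_intervalIntegral_inv_add_mul_I_of_pos {β : ℝ} (hβ : 0 < β) :
    Tendsto (fun T : ℝ => ∫ x in -T..T, (x + β * I : ℂ)⁻¹) atTop (𝓝 (-(π * I))) := by
  have harctan : Tendsto (fun T => 2 * Real.arctan (T / β)) atTop (𝓝 (2 * (π / 2))) :=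
    ((Real.tendsto_arctan_atTop.mono_right nhdsWithin_le_nhds).comp
      (tendsto_id.atTop_div_const hβ)).const_mul 2
  rw [mul_div_cancel₀ _ two_ne_zero] at harctan
  simpa only [intervalIntegral_inv_add_mul_I hβ.ne', neg_mul, Function.comp_def] using
    ((continuous_ofReal.tendsto _).comp harctan).neg.mul_const I

lemma tendsto_intervalIntegral_inv_add_mul_I_of_neg {β : ℝ} (hβ : β < 0) :
    Tendsto (fun T : ℝ => ∫ x in -T..T, (x + β * I : ℂ)⁻¹) atTop (𝓝 (π * I)) := by
  rw [← neg_neg (π * I : ℂ)]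
  refine (tendsto_intervalIntegral_inv_add_mul_I_of_pos (neg_pos.2 hβ)).neg.congr fun T => ?_
  rw [intervalIntegral_inv_add_mul_I hβ.ne, intervalIntegral_inv_add_mul_I (neg_pos.2 hβ).ne',
    div_neg, Real.arctan_neg]
  push_cast
  ring

lemma tendsto_intervalIntegral_sub_div {r L : ℂ} {β : ℝ} (hβ : β ≠ 0)
    (hF : Integrable fun x : ℝ => F (x + β * I))
    (hL : Tendsto (fun T : ℝ => ∫ x in -T..T, (x + β * I : ℂ)⁻¹) atTop (𝓝 L)) :
    Tendsto (fun T : ℝ => ∫ x in -T..T, (F (x + β * I) - r / (x + β * I))) atTop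
      (𝓝 ((∫ x : ℝ, F (x + β * I)) - r * L)) := by
  have hne : ∀ x : ℝ, (x + β * I : ℂ) ≠ 0 := fun x h => hβ (by simpa using congrArg im h)
  have hcont : Continuous fun x : ℝ => r * (x + β * I : ℂ)⁻¹ := by fun_prop (disch := exact hne)
  refine ((intervalIntegral_tendsto_integral hF tendsto_neg_atTop_atBot tendsto_id).sub
    (hL.const_mul r)).congr fun T => ?_
  simp only [div_eq_mul_inv, id]
  rw [← intervalIntegral.integral_const_mul, ← intervalIntegral.integral_sub
    hF.intervalIntegrable (hcont.intervalIntegrable _ _)]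

lemma integral_horizontal_sub_eq_two_pi_I_mul {r : ℂ} (ha : a < 0) (hb : 0 < b)
    (hd : DifferentiableOn ℂ F (im ⁻¹' [[a, b]] \ {0}))
    (hr : Tendsto (fun z => z * F z) (𝓝[≠] 0) (𝓝 r))
    (hF : Tendsto F (cocompact ℂ ⊓ 𝓟 (im ⁻¹' [[a, b]])) (𝓝 0))
    (hFa : Integrable fun x : ℝ => F (x + a * I)) (hFb : Integrable fun x : ℝ => F (x + b * I)) :
    (∫ x : ℝ, F (x + a * I)) - ∫ x : ℝ, F (x + b * I) = 2 * π * I * r := by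
  have hnhds : im ⁻¹' [[a, b]] ∈ 𝓝 0 := by
    refine continuous_im.continuousAt.preimage_mem_nhds ?_
    simpa [uIcc_of_lt (ha.trans hb)] using Icc_mem_nhds ha hb
  obtain ⟨H, hHd, hH⟩ := exists_differentiableOn_eq_sub_div hnhds hd (by simpa using hr)
  simp only [sub_zero] at hH
  have hpole : Tendsto (fun z : ℂ => r / z) (cocompact ℂ) (𝓝 0) := by
    simpa [div_eq_mul_inv] using (tendsto_inv₀_cobounded.mono_left
      (Metric.cobounded_eq_cocompact (α := ℂ)).ge).const_mul r
  have hHdecay : Tendsto H (cocompact ℂ ⊓ 𝓟 (im ⁻¹' [[a, b]])) (𝓝 0) := by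
    rw [← sub_zero 0]
    refine (hF.sub (hpole.mono_left inf_le_left)).congr' ?_
    have hne : ∀ᶠ z : ℂ in cocompact ℂ, z ≠ 0 := isCompact_singleton.compl_mem_cocompact
    exact (hne.filter_mono inf_le_left).mono fun z hz => (hH z hz).symm
  have hHF : ∀ β : ℝ, β ≠ 0 → ∀ x : ℝ,
      F (x + β * I) - r / (x + β * I) = H (x + β * I) := fun β hβ x =>
    (hH _ fun h => hβ (by simpa using congrArg im h)).symm
  have hlim := (tendsto_intervalIntegral_sub_div (r := r) ha.ne hFa
    (tendsto_intervalIntegral_inv_add_mul_I_of_neg ha)).sub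
    (tendsto_intervalIntegral_sub_div (r := r) hb.ne' hFb
      (tendsto_intervalIntegral_inv_add_mul_I_of_pos hb))
  simp only [hHF a ha.ne, hHF b hb.ne'] at hlim
  linear_combination tendsto_nhds_unique hlim (tendsto_intervalIntegral_horizontal_sub hHd hHdecay)

lemma slantedLine_sub_mul_cos (c θ x : ℝ) :
    slantedLine c θ (x - c * Real.cos θ) =
      exp (θ * I) * (x + (-(c * Real.sin θ) : ℝ) * I) := by
  rw [slantedLine, exp_mul_I]
  push_cast
  linear_combination -c * cos_sq_add_sin_sq (θ : ℂ) + c * sin (θ : ℂ) ^ 2 * I_sq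

lemma exp_mul_mem_slantedStrip {θ : ℝ} (hθ : 0 < Real.sin θ) {ζ : ℂ}
    (hζ : ζ.im ∈ [[-(b * Real.sin θ), -(a * Real.sin θ)]]) (hab : a ≤ b) :
    exp (θ * I) * ζ ∈ slantedStrip θ a b := by
  rw [uIcc_of_le (by gcongr)] at hζ
  refine ⟨-ζ.im / Real.sin θ, ⟨?_, ?_⟩, ζ.re + ζ.im * (Real.cos θ / Real.sin θ), ?_⟩
  · rw [le_div_iff₀ hθ]; linarith [hζ.2]
  · rw [div_le_iff₀ hθ]; linarith [hζ.1]
  · have hsin : sin (θ : ℂ) ≠ 0 := by simpa using ofReal_ne_zero.2 hθ.ne'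
    rw [slantedLine, exp_mul_I]
    push_cast
    field_simp
    linear_combination sin (θ : ℂ) * (cos θ + sin θ * I) * re_add_im ζ +
      ζ.im * cos_sq_add_sin_sq (θ : ℂ) - ζ.im * sin (θ : ℂ) ^ 2 * I_sq

lemma lineInt_sub_lineInt_eq_two_pi_I_mul {θ : ℝ} {r : ℂ} (hθ : 0 < Real.sin θ) (ha : a < 0)
    (hb : 0 < b) (hd : DifferentiableOn ℂ F (slantedStrip θ a b \ {0}))
    (hr : Tendsto (fun z => z * F z) (𝓝[≠] 0) (𝓝 r))
    (hF : Tendsto F (cocompact ℂ ⊓ 𝓟 (slantedStrip θ a b)) (𝓝 0))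
    (hFa : Integrable fun t => F (slantedLine a θ t))
    (hFb : Integrable fun t => F (slantedLine b θ t)) :
    lineInt b θ F - lineInt a θ F = 2 * π * I * r := by
  let G : ℂ → ℂ := fun ζ => F (exp (θ * I) * ζ) * exp (θ * I)
  have hrot : Tendsto (fun ζ : ℂ => exp (θ * I) * ζ) (cocompact ℂ) (cocompact ℂ) :=
    (Homeomorph.mulLeft₀ _ (exp_ne_zero _)).isClosedEmbedding.tendsto_cocompact
  have hmem : MapsTo (fun ζ : ℂ => exp (θ * I) * ζ)
      (im ⁻¹' [[-(b * Real.sin θ), -(a * Real.sin θ)]]) (slantedStrip θ a b) :=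
    fun ζ hζ => exp_mul_mem_slantedStrip hθ hζ (ha.trans hb).le
  have hrot0 : Tendsto (fun ζ : ℂ => exp (θ * I) * ζ) (𝓝[≠] 0) (𝓝[≠] 0) := by
    refine tendsto_nhdsWithin_iff.2 ⟨?_, eventually_mem_nhdsWithin.mono fun ζ hζ =>
      mul_ne_zero (exp_ne_zero _) hζ⟩
    exact ((continuous_const_mul (exp (θ * I))).tendsto' 0 0 (mul_zero _)).mono_left
      nhdsWithin_le_nhds
  have hline : ∀ c x : ℝ, G (x + (-(c * Real.sin θ) : ℝ) * I) =
      F (slantedLine c θ (x - c * Real.cos θ)) * exp (θ * I) := fun c x => by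
    rw [slantedLine_sub_mul_cos]
  have hG := integral_horizontal_sub_eq_two_pi_I_mul (F := G) (r := r)
    (neg_neg_iff_pos.2 (mul_pos hb hθ)) (neg_pos.2 (mul_neg_of_neg_of_pos ha hθ))
    ((hd.comp (by fun_prop) fun ζ hζ => ⟨hmem hζ.1, mul_ne_zero (exp_ne_zero _) hζ.2⟩).mul_const _)
    ((hr.comp hrot0).congr fun ζ => by simp only [G, Function.comp_apply]; ring)
    (by simpa using (hF.comp (tendsto_inf.2 ⟨hrot.mono_left inf_le_left,
      (tendsto_principal_principal.2 hmem).mono_left inf_le_right⟩)).mul_const (exp (θ * I)))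
    (by simpa only [hline] using (hFb.comp_sub_right _).mul_const _)
    (by simpa only [hline] using (hFa.comp_sub_right _).mul_const _)
  simp only [hline] at hG
  rwa [integral_sub_right_eq_self (fun t => F (slantedLine b θ t) * exp (θ * I)),
    integral_sub_right_eq_self (fun t => F (slantedLine a θ t) * exp (θ * I))] at hG

end Residue

section MordellKernel

/-- The kernel `e^{2πiuz} / (e^{πiu} - e^{-πiu})`, whose integral over `0 ↗ 1` in `u` is the kernel
`1 / (e^{-2πiz} + 1)` of the transformed integral. -/
noncomputable def mordellKernel (z u : ℂ) : ℂ := exp (2 * π * I * u * z) / (2 * I * sin (π * u))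

variable {a b c θ : ℝ} {z : ℂ}

lemma mordellKernel_sub_one (z u : ℂ) :
    mordellKernel z (u - 1) = -exp (-(2 * π * I * z)) * mordellKernel z u := by
  have hexp : exp (2 * π * I * (u - 1) * z) = exp (-(2 * π * I * z)) * exp (2 * π * I * u * z) := by
    rw [← exp_add]; ring_nf
  rw [mordellKernel, mordellKernel, hexp, mul_sub_one, sin_sub_pi, mul_neg, div_neg, neg_mul,
    mul_div_assoc]

lemma tendsto_mul_mordellKernel_zero (z : ℂ) :
    Tendsto (fun u => u * mordellKernel z u) (𝓝[≠] 0) (𝓝 (2 * π * I)⁻¹) := by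
  have hsin : HasDerivAt (fun u : ℂ => 2 * I * sin (π * u)) (2 * π * I) 0 := by
    have h := ((hasDerivAt_id (0 : ℂ)).const_mul (π : ℂ)).csin.const_mul (2 * I)
    simp only [id, mul_zero, cos_zero, mul_one, one_mul] at h
    exact h.congr_deriv (mul_right_comm _ _ _)
  have hexp : Tendsto (fun u => exp (2 * π * I * u * z)) (𝓝[≠] 0) (𝓝 1) := by
    refine (Continuous.tendsto' ?_ 0 1 (by simp)).mono_left nhdsWithin_le_nhds
    fun_prop
  have hslope := hasDerivAt_iff_tendsto_slope_zero.1 hsin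
  rw [← one_mul (2 * π * I : ℂ)⁻¹]
  refine (hexp.mul (hslope.inv₀ two_pi_I_ne_zero)).congr fun u => ?_
  simp only [mordellKernel, zero_add, mul_zero, sin_zero, sub_zero, smul_eq_mul, mul_inv, inv_inv,
    div_eq_mul_inv]
  ring

lemma differentiableOn_mordellKernel (hθ : Real.sin θ ≠ 0) (ha : -1 < a) (hb : b < 1) :
    DifferentiableOn ℂ (mordellKernel z) (slantedStrip θ a b \ {0}) := by
  rintro _ ⟨⟨x, hx, t, rfl⟩, hne⟩
  refine DifferentiableAt.differentiableWithinAt ?_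
  unfold mordellKernel
  refine DifferentiableAt.div (by fun_prop) (by fun_prop) (mul_ne_zero (by simp) fun h => ?_)
  obtain ⟨n, hn⟩ := sin_pi_mul_eq_zero_iff.1 h
  obtain rfl : x = n := by_contra fun h => slantedLine_ne_ofReal hθ h t (by simpa using hn)
  have hn0 : n = 0 := by
    have h₁ : -1 < n := by exact_mod_cast ha.trans_le hx.1
    have h₂ : n < 1 := by exact_mod_cast hx.2.trans_lt hb
    lia
  exact hne (by simpa [hn0] using hn)

lemma norm_exp_two_pi_I_mul_slantedLine_mul_le (c θ t : ℝ) (z : ℂ) :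
    ‖exp (2 * π * I * slantedLine c θ t * z)‖ ≤
      Real.exp (-(2 * π * c * z.im)) * Real.exp (2 * π * |(exp (θ * I) * z).im| * |t|) := by
  have hre : (2 * π * I * slantedLine c θ t * z).re =
      -(2 * π * c * z.im) - 2 * π * ((exp (θ * I) * z).im * t) := by
    rw [slantedLine, show 2 * π * I * (c + exp (θ * I) * t) * z =
      (2 * π * c : ℝ) * (z * I) + (2 * π * t : ℝ) * (exp (θ * I) * z * I) by push_cast; ring,
      add_re, re_ofReal_mul, re_ofReal_mul, mul_I_re, mul_I_re]
    ring
  rw [norm_exp, hre, ← Real.exp_add, Real.exp_le_exp, mul_assoc (2 * π) |_|, ← abs_mul]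
  linarith [mul_le_mul_of_nonneg_left (neg_abs_le ((exp (θ * I) * z).im * t)) Real.two_pi_pos.le]

lemma norm_mordellKernel_slantedLine_le {C t : ℝ}
    (hC : Real.exp (π * |(slantedLine c θ t).im|) ≤ C * ‖sin (π * slantedLine c θ t)‖) :
    ‖mordellKernel z (slantedLine c θ t)‖ ≤ C / 2 * Real.exp (-(2 * π * c * z.im)) *
      Real.exp (-(2 * π * (|Real.sin θ| / 2 - |(exp (θ * I) * z).im|) * |t|)) := by
  have hsin : 0 < ‖sin (π * slantedLine c θ t)‖ := norm_pos_iff.2 fun h => by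
    rw [h, norm_zero, mul_zero] at hC
    exact hC.not_gt (Real.exp_pos _)
  rw [slantedLine_im, abs_mul] at hC
  simp only [mordellKernel, norm_div, norm_mul, norm_ofNat, norm_I, mul_one]
  rw [div_le_iff₀ (by positivity)]
  calc _ ≤ _ := norm_exp_two_pi_I_mul_slantedLine_mul_le c θ t z
    _ = Real.exp (-(2 * π * c * z.im)) *
        Real.exp (-(2 * π * (|Real.sin θ| / 2 - |(exp (θ * I) * z).im|) * |t|)) *
        Real.exp (π * (|Real.sin θ| * |t|)) := by
      simp only [← Real.exp_add]; ring_nf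
    _ ≤ Real.exp (-(2 * π * c * z.im)) *
        Real.exp (-(2 * π * (|Real.sin θ| / 2 - |(exp (θ * I) * z).im|) * |t|)) *
        (C * ‖sin (π * slantedLine c θ t)‖) := by gcongr
    _ = _ := by ring

lemma integrable_exp_neg_mul_abs {k : ℝ} (hk : 0 < k) :
    Integrable fun t : ℝ => Real.exp (-(k * |t|)) := by
  rw [← integrableOn_univ, ← Iic_union_Ioi (a := (0 : ℝ))]
  refine IntegrableOn.union ?_ ?_
  · refine (integrableOn_exp_mul_Iic hk 0).congr_fun (fun t ht => ?_) measurableSet_Iic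
    simp only [abs_of_nonpos (mem_Iic.1 ht), mul_neg, neg_neg]
  · refine (integrableOn_exp_mul_Ioi (neg_neg_iff_pos.2 hk) 0).congr_fun (fun t ht => ?_)
      measurableSet_Ioi
    simp only [abs_of_pos (mem_Ioi.1 ht), neg_mul]

lemma continuous_mordellKernel_slantedLine (hc : ∀ n : ℤ, c ≠ n) (hθ : Real.sin θ ≠ 0) :
    Continuous fun t => mordellKernel z (slantedLine c θ t) := by
  have hsin := sin_pi_mul_slantedLine_ne_zero hc hθ
  unfold mordellKernel
  fun_prop (disch := simp [hsin])

lemma integrable_mordellKernel_slantedLine (hc : ∀ n : ℤ, c ≠ n)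
    (hz : |(exp (θ * I) * z).im| < |Real.sin θ| / 2) :
    Integrable fun t => mordellKernel z (slantedLine c θ t) := by
  have hθ : Real.sin θ ≠ 0 := fun h => (abs_nonneg _).not_gt (hz.trans_eq (by simp [h]))
  obtain ⟨C, hC⟩ := exists_exp_le_mul_norm_sin_slantedLine hc hθ
  have hk : 0 < 2 * π * (|Real.sin θ| / 2 - |(exp (θ * I) * z).im|) :=
    mul_pos Real.two_pi_pos (sub_pos.2 hz)
  exact ((integrable_exp_neg_mul_abs hk).const_mul _).mono'
    (continuous_mordellKernel_slantedLine hc hθ).aestronglyMeasurable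
    (.of_forall fun t => norm_mordellKernel_slantedLine_le (hC t))

lemma eventually_exists_le_abs_slantedLine_eq (R : ℝ) :
    ∀ᶠ u in cocompact ℂ ⊓ 𝓟 (slantedStrip θ a b),
      ∃ x ∈ Icc a b, ∃ t, R ≤ |t| ∧ slantedLine x θ t = u := by
  have hfar : ∀ᶠ u : ℂ in cocompact ℂ, max |a| |b| + R ≤ ‖u‖ :=
    tendsto_norm_cocompact_atTop.eventually_ge_atTop _
  filter_upwards [hfar.filter_mono inf_le_left, mem_inf_of_right (mem_principal_self _)]
  rintro _ hu ⟨x, hx, t, rfl⟩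
  refine ⟨x, hx, t, ?_, rfl⟩
  have hnorm : ‖slantedLine x θ t‖ ≤ |x| + |t| := by
    simpa [slantedLine, norm_exp_ofReal_mul_I] using norm_add_le (x : ℂ) (exp (θ * I) * t)
  linarith [abs_le_max_abs_abs hx.1 hx.2]

lemma tendsto_mordellKernel_slantedStrip (hz : |(exp (θ * I) * z).im| < |Real.sin θ| / 2) :
    Tendsto (mordellKernel z) (cocompact ℂ ⊓ 𝓟 (slantedStrip θ a b)) (𝓝 0) := by
  have hθ : 0 < |Real.sin θ| := by linarith [abs_nonneg (exp (θ * I) * z).im]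
  have hk : 0 < 2 * π * (|Real.sin θ| / 2 - |(exp (θ * I) * z).im|) :=
    mul_pos Real.two_pi_pos (sub_pos.2 hz)
  let B : ℝ → ℝ := fun τ => 4 / 2 * Real.exp (2 * π * (max |a| |b| * |z.im|)) *
    Real.exp (-(2 * π * (|Real.sin θ| / 2 - |(exp (θ * I) * z).im|) * τ))
  have hB : Tendsto B atTop (𝓝 0) := by
    rw [← mul_zero (4 / 2 * Real.exp (2 * π * (max |a| |b| * |z.im|)))]
    exact (Real.tendsto_exp_neg_atTop_nhds_zero.comp
      (tendsto_id.const_mul_atTop hk)).const_mul _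
  refine Metric.tendsto_nhds.2 fun ε hε => ?_
  obtain ⟨R, hR⟩ := eventually_atTop.1 (hB.eventually_lt_const hε)
  filter_upwards [eventually_exists_le_abs_slantedLine_eq (max R (1 / (π * |Real.sin θ|)))]
  rintro _ ⟨x, hx, t, ht, rfl⟩
  have him : (π * slantedLine x θ t).im = π * (slantedLine x θ t).im := im_ofReal_mul _ _
  have hfar : 1 ≤ |(π * slantedLine x θ t).im| := by
    have h := (div_le_iff₀' (by positivity)).1 ((le_max_right _ _).trans ht)
    rwa [him, slantedLine_im, abs_mul, abs_mul, abs_of_pos Real.pi_pos, ← mul_assoc]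
  have hsin := exp_abs_im_le_four_mul_norm_sin hfar
  rw [him, abs_mul, abs_of_pos Real.pi_pos] at hsin
  have hxz : -(x * z.im) ≤ max |a| |b| * |z.im| :=
    (neg_le_abs _).trans (by rw [abs_mul]; gcongr; exact abs_le_max_abs_abs hx.1 hx.2)
  rw [dist_zero_right]
  refine (norm_mordellKernel_slantedLine_le hsin).trans_lt
    (lt_of_le_of_lt ?_ (hR |t| ((le_max_left _ _).trans ht)))
  simp only [B]
  gcongr
  linarith [mul_le_mul_of_nonneg_left hxz Real.two_pi_pos.le]

lemma lineInt_mordellKernel (hc : 0 < c) (hc' : c < 1) (hθ : 0 < Real.sin θ)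
    (hz : |(exp (θ * I) * z).im| < Real.sin θ / 2) :
    lineInt c θ (mordellKernel z) = (exp (-(2 * π * I * z)) + 1)⁻¹ := by
  have hnot_int := ne_intCast_of_pos_of_lt_one hc hc'
  have hnot_int' : ∀ n : ℤ, c - 1 ≠ n := fun n hn => hnot_int (n + 1) (by push_cast; linarith)
  rw [← abs_of_pos hθ] at hz
  have hjump := lineInt_sub_lineInt_eq_two_pi_I_mul hθ (sub_neg.2 hc') hc
    (differentiableOn_mordellKernel hθ.ne' (by linarith) hc') (tendsto_mul_mordellKernel_zero z)
    (tendsto_mordellKernel_slantedStrip hz) (integrable_mordellKernel_slantedLine hnot_int' hz)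
    (integrable_mordellKernel_slantedLine hnot_int hz)
  have hperiod : lineInt (c - 1) θ (mordellKernel z) =
      -exp (-(2 * π * I * z)) * lineInt c θ (mordellKernel z) := by
    rw [← lineInt_const_mul]
    refine integral_congr_ae (.of_forall fun t => ?_)
    simp only [← mordellKernel_sub_one]
    push_cast
    ring_nf
  rw [hperiod, mul_inv_cancel₀ two_pi_I_ne_zero] at hjump
  exact eq_inv_of_mul_eq_one_right (by linear_combination hjump)

end MordellKernel

section Mordell

variable {c c' θ : ℝ} {a b d k z : ℂ}

lemma slantedLine_quadratic (a b d : ℂ) (c θ t : ℝ) :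
    a * slantedLine c θ t ^ 2 + b * slantedLine c θ t + d =
      a * exp (θ * I) ^ 2 * t ^ 2 + (2 * a * c + b) * exp (θ * I) * t +
        (a * c ^ 2 + b * c + d) := by
  simp only [slantedLine]; ring

lemma integrable_cexp_quadratic_slantedLine (ha : (a * exp (θ * I) ^ 2).re < 0) (b d : ℂ) (c : ℝ) :
    Integrable fun t =>
      exp (a * slantedLine c θ t ^ 2 + b * slantedLine c θ t + d) := by
  simpa only [slantedLine_quadratic] using integrable_cexp_quadratic' ha _ _

lemma lineInt_cexp_quadratic (ha : (a * exp (θ * I) ^ 2).re < 0) (b d : ℂ) (c : ℝ) :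
    lineInt c θ (fun z => exp (a * z ^ 2 + b * z + d)) =
      (π / -(a * exp (θ * I) ^ 2)) ^ (1 / 2 : ℂ) * exp (d - b ^ 2 / (4 * a)) * exp (θ * I) := by
  have ha₀ : a ≠ 0 := by rintro rfl; simp at ha
  have hvertex : a * c ^ 2 + b * c + d -
      ((2 * a * c + b) * exp (θ * I)) ^ 2 / (4 * (a * exp (θ * I) ^ 2)) =
        d - b ^ 2 / (4 * a) := by
    field_simp [exp_ne_zero (θ * I)]
    ring
  rw [← hvertex, ← integral_cexp_quadratic ha, ← integral_mul_const]
  simp only [← slantedLine_quadratic, slantedLine, lineInt]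

lemma sin_pi_div_four_pos : 0 < Real.sin (π / 4) := by
  rw [Real.sin_pi_div_four]; positivity

lemma exp_pi_div_four_mul_I_sq : exp ((π / 4 : ℝ) * I) ^ 2 = I := by
  rw [← exp_nat_mul, ← mul_assoc]
  convert exp_pi_div_two_mul_I using 3
  push_cast
  ring

lemma exp_neg_pi_div_four_mul_I_sq : exp ((-(π / 4) : ℝ) * I) ^ 2 = -I := by
  rw [ofReal_neg, neg_mul, exp_neg, inv_pow, exp_pi_div_four_mul_I_sq, inv_I]

lemma neg_pi_I_mul_exp_neg_pi_div_four_mul_I_sq :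
    -(π * I) * exp ((-(π / 4) : ℝ) * I) ^ 2 = (-π : ℝ) := by
  rw [exp_neg_pi_div_four_mul_I_sq]
  push_cast
  linear_combination π * I_sq

lemma re_neg_pi_I_mul_exp_neg_pi_div_four_mul_I_sq_neg :
    (-(π * I) * exp ((-(π / 4) : ℝ) * I) ^ 2).re < 0 := by
  rw [neg_pi_I_mul_exp_neg_pi_div_four_mul_I_sq, ofReal_re]
  exact neg_neg_iff_pos.2 Real.pi_pos

lemma exp_pi_div_four_mul_I_mul_exp_neg :
    exp ((π / 4 : ℝ) * I) * exp ((-(π / 4) : ℝ) * I) = 1 := by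
  rw [← exp_add, ← add_mul, ← ofReal_add, add_neg_cancel, ofReal_zero, zero_mul, exp_zero]

lemma exp_quadratic_eq_lineInt (k u : ℂ) (c : ℝ) :
    exp (π * I * u ^ 2 - 2 * π * I * k * u) = exp ((π / 4 : ℝ) * I) *
      lineInt c (-(π / 4)) (fun z => exp (-(π * I * (z + k) ^ 2)) * exp (2 * π * I * u * z)) := by
  have hexpand : ∀ z, exp (-(π * I * (z + k) ^ 2)) * exp (2 * π * I * u * z) =
      exp (-(π * I) * z ^ 2 + 2 * π * I * (u - k) * z + -(π * I * k ^ 2)) := fun z => by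
    rw [← exp_add]; ring_nf
  simp only [hexpand]
  rw [lineInt_cexp_quadratic re_neg_pi_I_mul_exp_neg_pi_div_four_mul_I_sq_neg,
    neg_pi_I_mul_exp_neg_pi_div_four_mul_I_sq, ofReal_neg, neg_neg,
    div_self (ofReal_ne_zero.2 Real.pi_ne_zero), one_cpow, one_mul, mul_left_comm,
    exp_pi_div_four_mul_I_mul_exp_neg, mul_one]
  congr 1
  have hπ : (π : ℂ) ≠ 0 := ofReal_ne_zero.2 Real.pi_ne_zero
  field_simp
  ring

lemma exp_pi_div_four_mul_I_mul_slantedLine_im (c x : ℝ) :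
    (exp ((π / 4 : ℝ) * I) * slantedLine c (-(π / 4)) x).im = c * Real.sin (π / 4) := by
  rw [slantedLine, mul_add, ← mul_assoc, exp_pi_div_four_mul_I_mul_exp_neg, one_mul, add_im,
    ofReal_im, add_zero, im_mul_ofReal, exp_ofReal_mul_I_im, mul_comm]

lemma norm_exp_two_pi_I_mul_ofReal_mul (c : ℝ) (z : ℂ) :
    ‖exp (2 * π * I * c * z)‖ = Real.exp (-(2 * π * c * z.im)) := by
  simp [norm_exp]

lemma integrable_exp_mul_mordellKernel (k : ℂ) (hc : ∀ n : ℤ, c ≠ n) (hc' : |c'| < 1 / 2) :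
    Integrable fun p : ℝ × ℝ => exp (-(π * I * (slantedLine c' (-(π / 4)) p.2 + k) ^ 2)) *
      mordellKernel (slantedLine c' (-(π / 4)) p.2) (slantedLine c (π / 4) p.1) := by
  have hsin := sin_pi_div_four_pos
  obtain ⟨C, hC⟩ := exists_exp_le_mul_norm_sin_slantedLine hc hsin.ne'
  have hκ : 0 < 2 * π * (|Real.sin (π / 4)| / 2 - |c' * Real.sin (π / 4)|) := by
    rw [abs_mul]
    exact mul_pos Real.two_pi_pos (by nlinarith [abs_pos.2 hsin.ne'])
  have hgauss := (integrable_cexp_quadratic_slantedLine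
    re_neg_pi_I_mul_exp_neg_pi_div_four_mul_I_sq_neg (2 * π * I * (c - k)) (-(π * I * k ^ 2))
    c').norm
  have hdom := ((integrable_exp_neg_mul_abs hκ).const_mul (C / 2)).mul_prod hgauss
  have hne := sin_pi_mul_slantedLine_ne_zero hc hsin.ne'
  refine hdom.mono' (Continuous.aestronglyMeasurable ?_) (.of_forall fun ⟨t, x⟩ => ?_)
  · unfold mordellKernel
    fun_prop (disch := simp [hne])
  simp only
  set z := slantedLine c' (-(π / 4)) x with hz
  have hbound := norm_mordellKernel_slantedLine_le (z := z) (hC t)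
  rw [hz, exp_pi_div_four_mul_I_mul_slantedLine_im, ← hz] at hbound
  have hnorm : ‖exp (-(π * I) * z ^ 2 + 2 * π * I * (c - k) * z + -(π * I * k ^ 2))‖ =
      ‖exp (-(π * I * (z + k) ^ 2))‖ * Real.exp (-(2 * π * c * z.im)) := by
    rw [← norm_exp_two_pi_I_mul_ofReal_mul, ← norm_mul, ← exp_add]
    ring_nf
  rw [norm_mul, hnorm]
  exact (mul_le_mul_of_nonneg_left hbound (norm_nonneg _)).trans_eq (by ring)

lemma lineInt_mordell (k : ℂ) (hc : 0 < c) (hc' : c < 1) (hc'' : |c'| < 1 / 2) :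
    lineInt c (π / 4) (fun u => exp (π * I * u ^ 2 - 2 * π * I * k * u) / (2 * I * sin (π * u))) =
      exp ((π / 4 : ℝ) * I) * lineInt c' (-(π / 4))
        (fun z => exp (-(π * I * (z + k) ^ 2)) / (exp (-(2 * π * I * z)) + 1)) := by
  have hexpand : ∀ u, exp (π * I * u ^ 2 - 2 * π * I * k * u) / (2 * I * sin (π * u)) =
      exp ((π / 4 : ℝ) * I) * lineInt c' (-(π / 4))
        fun z => exp (-(π * I * (z + k) ^ 2)) * mordellKernel z u := fun u => by
    rw [exp_quadratic_eq_lineInt k u c', mul_div_assoc, div_eq_mul_inv (lineInt _ _ _),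
      ← lineInt_mul_const]
    exact congrArg _ (lineInt_congr fun x => by rw [mordellKernel]; ring)
  simp only [hexpand, lineInt_const_mul]
  rw [lineInt_lineInt_swap
    (integrable_exp_mul_mordellKernel k (ne_intCast_of_pos_of_lt_one hc hc') hc'')]
  congr 1
  refine lineInt_congr fun x => ?_
  rw [lineInt_const_mul, lineInt_mordellKernel hc hc' sin_pi_div_four_pos, ← div_eq_mul_inv]
  rw [exp_pi_div_four_mul_I_mul_slantedLine_im, abs_mul, abs_of_pos sin_pi_div_four_pos]
  nlinarith [sin_pi_div_four_pos]

end Mordell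

section Laplace

lemma mul_exp_neg_mul_le {σ σ' : ℝ} (h : σ < σ') (t : ℝ) :
    t * Real.exp (-(σ' * t)) ≤ (σ' - σ)⁻¹ * Real.exp (-(σ * t)) := by
  have hδ := sub_pos.2 h
  have hle : t ≤ (σ' - σ)⁻¹ * Real.exp ((σ' - σ) * t) := by
    rw [← div_eq_inv_mul, le_div_iff₀' hδ]
    linarith [Real.add_one_le_exp ((σ' - σ) * t)]
  refine (mul_le_mul_of_nonneg_right hle (Real.exp_pos _).le).trans_eq ?_
  rw [mul_assoc, ← Real.exp_add]
  ring_nf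

lemma differentiableOn_integral_mul_exp_neg {f : ℝ → ℂ} {σ₀ : ℝ}
    (hf : ∀ σ > σ₀, IntegrableOn (fun t => f t * exp (-(σ * t))) (Ioi 0)) :
    DifferentiableOn ℂ (fun r => ∫ t in Ioi (0 : ℝ), f t * exp (-(r * t))) {r | σ₀ < r.re} := by
  intro z (hz : σ₀ < z.re)
  obtain ⟨σ, hσ, hσz⟩ := exists_between hz
  obtain ⟨σ', hσ', hσz'⟩ := exists_between hσz
  have hfm : AEStronglyMeasurable f (volume.restrict (Ioi 0)) := by
    refine ((hf σ hσ).aestronglyMeasurable.mul (g := fun t : ℝ => exp (σ * t))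
      (by fun_prop)).congr (.of_forall fun t => ?_)
    simp only [Pi.mul_apply, mul_assoc, ← exp_add, neg_add_cancel, exp_zero, mul_one]
  have hnorm (w : ℂ) (t : ℝ) : ‖f t * exp (-(w * t))‖ = ‖f t‖ * Real.exp (-(w.re * t)) := by
    simp [norm_exp]
  have hmono {w : ℂ} (hw : σ' < w.re) {t : ℝ} (ht : 0 < t) :
      ‖f t * (exp (-(w * t)) * -t)‖ ≤ (σ' - σ)⁻¹ * ‖f t * exp (-(σ * t))‖ := by
    rw [← mul_assoc, norm_mul, hnorm, norm_neg, norm_real, Real.norm_of_nonneg ht.le, hnorm,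
      ofReal_re, mul_left_comm _ ‖f t‖, mul_assoc, mul_comm _ t]
    refine mul_le_mul_of_nonneg_left (le_trans ?_ (mul_exp_neg_mul_le hσ' t)) (norm_nonneg _)
    gcongr
  have hint : IntegrableOn (fun t => f t * exp (-(z * t))) (Ioi 0) := by
    refine Integrable.mono (hf z.re hz) (hfm.mul (by fun_prop)) (.of_forall fun t => ?_)
    rw [hnorm, hnorm, ofReal_re]
  refine (hasDerivAt_integral_of_dominated_loc_of_deriv_le
    (F := fun w t => f t * exp (-(w * t)))
    (F' := fun w t => f t * (exp (-(w * t)) * -t)) (s := {w | σ' < w.re})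
    ((isOpen_lt continuous_const continuous_re).mem_nhds hσz')
    (.of_forall fun w => hfm.mul (by fun_prop)) hint (hfm.mul (by fun_prop))
    ((ae_restrict_mem measurableSet_Ioi).mono fun t ht w hw => hmono hw ht)
    ((hf σ hσ).norm.const_mul _)
    (.of_forall fun t w _ => ?_)).2.differentiableAt.differentiableWithinAt
  exact (((hasDerivAt_mul_const (t : ℂ)).neg).cexp).const_mul _

lemma norm_cpow_mul_exp_neg {t : ℝ} (ht : 0 < t) (s r : ℂ) :
    ‖(t : ℂ) ^ (s - 1) * exp (-(r * t))‖ = t ^ (s.re - 1) * Real.exp (-(r.re * t)) := by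
  rw [norm_mul, norm_cpow_eq_rpow_re_of_pos ht, norm_exp]; simp

variable {s r z u : ℂ}

lemma integrableOn_cpow_mul_exp_neg (hs : 0 < s.re) (hr : 0 < r.re) :
    IntegrableOn (fun t : ℝ => (t : ℂ) ^ (s - 1) * exp (-(r * t))) (Ioi 0) := by
  have hdom := integrableOn_rpow_mul_exp_neg_mul_rpow (p := 1) (s := s.re - 1) (by linarith)
    one_pos hr
  simp only [Real.rpow_one] at hdom
  refine hdom.mono' (Measurable.aestronglyMeasurable (by fun_prop))
    ((ae_restrict_mem measurableSet_Ioi).mono fun t ht => ?_)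
  rw [norm_cpow_mul_exp_neg ht, neg_mul]

lemma integral_cpow_mul_exp_neg_mul_Ioi_of_re_pos (hs : 0 < s.re) (hr : 0 < r.re) :
    ∫ t in Ioi (0 : ℝ), (t : ℂ) ^ (s - 1) * exp (-(r * t)) = r ^ (-s) * Gamma s := by
  have hopen : IsOpen {z : ℂ | 0 < z.re} := isOpen_lt continuous_const continuous_re
  have hintegral : DifferentiableOn ℂ
      (fun r => ∫ t in Ioi (0 : ℝ), (t : ℂ) ^ (s - 1) * exp (-(r * t))) {z | 0 < z.re} :=
    differentiableOn_integral_mul_exp_neg fun σ hσ => integrableOn_cpow_mul_exp_neg hs hσ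
  have hcpow : DifferentiableOn ℂ (fun r => r ^ (-s) * Gamma s) {z | 0 < z.re} := fun z hz =>
    ((differentiableAt_id.cpow_const (.inl hz)).mul_const _).differentiableWithinAt
  have hreal : ∃ᶠ z in 𝓝[≠] (1 : ℂ),
      ∫ t in Ioi (0 : ℝ), (t : ℂ) ^ (s - 1) * exp (-(z * t)) = z ^ (-s) * Gamma s := by
    have hofReal : Tendsto ((↑) : ℝ → ℂ) (𝓝[≠] 1) (𝓝[≠] 1) :=
      (continuous_ofReal.tendsto' 1 1 ofReal_one).inf
        (tendsto_principal_principal.2 fun x hx => by simpa using hx)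
    refine hofReal.frequently (Eventually.frequently ?_)
    filter_upwards [(lt_mem_nhds one_pos).filter_mono nhdsWithin_le_nhds] with x hx
    rw [integral_cpow_mul_exp_neg_mul_Ioi hs hx, one_div, inv_cpow_ofReal_nonneg hx.le, cpow_neg]
  exact (hintegral.analyticOnNhd hopen).eqOn_of_preconnected_of_frequently_eq
    (hcpow.analyticOnNhd hopen) (convex_halfSpace_re_gt 0).isPreconnected
    (by simp) hreal hr

lemma mul_cpow_of_re_pos (hz : 0 < z.re) (hzu : 0 < (z * u).re) (s : ℂ) :
    (z * u) ^ s = z ^ s * u ^ s := by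
  have hzu₀ : z * u ≠ 0 := by rintro h; simp [h] at hzu
  obtain ⟨hz₀, hu₀⟩ := mul_ne_zero_iff.1 hzu₀
  have hargz := abs_lt.1 (abs_arg_lt_pi_div_two_iff.2 (.inl hz))
  have hargzu := abs_lt.1 (abs_arg_lt_pi_div_two_iff.2 (.inl hzu))
  have hlog : log u = log (z * u) - log z := by
    conv_lhs => rw [← mul_div_cancel_left₀ u hz₀, ← exp_log hzu₀, ← exp_log hz₀, ← exp_sub]
    rw [exp_log hz₀, log_exp] <;> rw [sub_im, log_im, log_im] <;> linarith
  rw [cpow_def_of_ne_zero hzu₀, cpow_def_of_ne_zero hz₀, cpow_def_of_ne_zero hu₀, ← exp_add, hlog]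
  ring_nf

lemma cpow_neg_eq_mul_integral (hs : 0 < s.re) (hz : 0 < z.re) (hzu : 0 < (z * u).re) :
    u ^ (-s) = z ^ s * (Gamma s)⁻¹ *
      ∫ w in Ioi (0 : ℝ), (w : ℂ) ^ (s - 1) * exp (-(z * u * w)) := by
  have hz₀ : z ^ s ≠ 0 := by
    rw [cpow_ne_zero_iff]
    exact .inl fun h => hz.ne' (by simp [h])
  rw [integral_cpow_mul_exp_neg_mul_Ioi_of_re_pos hs hzu, mul_cpow_of_re_pos hz hzu, cpow_neg z]
  field_simp [Gamma_ne_zero_of_re_pos hs]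

end Laplace

section ParabolicCylinder

/-- The factor `√(2π) e^{iπ/4}` in the argument of the parabolic cylinder function; it is the square
root of `2πi` with positive real part. -/
noncomputable def parabolicScale : ℂ := √(2 * π) * exp (π * I / 4)

lemma parabolicScale_eq : parabolicScale = √(2 * π) * exp ((π / 4 : ℝ) * I) := by
  rw [parabolicScale]; push_cast; ring_nf

lemma parabolicScale_sq : parabolicScale ^ 2 = 2 * π * I := by
  rw [parabolicScale_eq, mul_pow, exp_pi_div_four_mul_I_sq, ← ofReal_pow,
    Real.sq_sqrt Real.two_pi_pos.le]
  push_cast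
  rfl

lemma parabolicScale_re_pos : 0 < parabolicScale.re := by
  rw [parabolicScale_eq, re_ofReal_mul, exp_ofReal_mul_I_re, Real.cos_pi_div_four]
  positivity

lemma parabolicScale_ne_zero : parabolicScale ≠ 0 := fun h => by
  simpa [h] using parabolicScale_re_pos

lemma parabolicScale_cpow (s : ℂ) :
    parabolicScale ^ s = (2 * π : ℂ) ^ (s / 2) * exp (π * I * s / 4) := by
  have htwo_pi : (2 * π : ℂ) ≠ 0 := mod_cast Real.two_pi_pos.ne'
  have hlog : log parabolicScale = log (2 * π) / 2 + π * I / 4 := by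
    have him : (π * I / 4).im = π / 4 := by
      simp
    rw [parabolicScale, log_ofReal_mul (by positivity) (exp_ne_zero _), log_exp,
      Real.log_sqrt Real.two_pi_pos.le, ofReal_div, ofReal_log Real.two_pi_pos.le]
    · push_cast; rfl
    all_goals rw [him]; linarith [Real.pi_pos]
  rw [cpow_def_of_ne_zero parabolicScale_ne_zero, cpow_def_of_ne_zero htwo_pi, hlog, ← exp_add]
  ring_nf

lemma parabolicScale_mul_slantedLine_re (c t : ℝ) :
    (parabolicScale * slantedLine c (π / 4) t).re = c * parabolicScale.re := by
  rw [slantedLine, parabolicScale_eq, mul_add, mul_assoc _ (exp _) (_ * _), ← mul_assoc (exp _),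
    ← pow_two, exp_pi_div_four_mul_I_sq]
  simp only [add_re, mul_re, mul_im, ofReal_re, ofReal_im, I_re, I_im]
  ring

lemma slantedLine_add_div_parabolicScale (c x w : ℝ) :
    slantedLine c (-(π / 4)) x + w / parabolicScale =
      slantedLine c (-(π / 4)) (x + w / √(2 * π)) := by
  have hexp : exp ((-(π / 4) : ℝ) * I) = (exp ((π / 4 : ℝ) * I))⁻¹ :=
    eq_inv_of_mul_eq_one_right exp_pi_div_four_mul_I_mul_exp_neg
  rw [slantedLine, slantedLine, parabolicScale_eq, hexp]
  push_cast
  ring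

end ParabolicCylinder

section Fubini

variable {c c' : ℝ} {s : ℂ}

lemma integrable_comp_add_mul_prod {𝕜 α : Type*} [NormedRing 𝕜] [MeasurableSpace α]
    {μ : Measure α} [SFinite μ] {f : ℝ → 𝕜} {g : α → 𝕜} {φ : α → ℝ} (hf : Integrable f)
    (hg : Integrable g μ) (hφ : Measurable φ) :
    Integrable (fun p : ℝ × α => f (p.1 + φ p.2) * g p.2) (volume.prod μ) := by
  have hshear : MeasurePreserving (fun p : α × ℝ => (p.1, p.2 + φ p.1))
      (μ.prod volume) (μ.prod volume) :=
    (MeasurePreserving.id μ).skew_product (by fun_prop)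
      (.of_forall fun a => (measurePreserving_add_right volume (φ a)).map_eq)
  exact (((Measure.measurePreserving_swap.comp hshear).comp
    Measure.measurePreserving_swap).integrable_comp_of_integrable (hf.mul_prod hg))

lemma integrable_exp_div_sin_slantedLine (hc : ∀ n : ℤ, c ≠ n) :
    Integrable fun t => exp (π * I * slantedLine c (π / 4) t ^ 2) /
      (2 * I * sin (π * slantedLine c (π / 4) t)) := by
  have hsin := sin_pi_div_four_pos.ne'
  have hne := sin_pi_mul_slantedLine_ne_zero hc hsin
  obtain ⟨C, hC⟩ := exists_exp_le_mul_norm_sin_slantedLine hc hsin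
  have hre : (π * I * exp ((π / 4 : ℝ) * I) ^ 2).re < 0 := by
    rw [exp_pi_div_four_mul_I_sq, mul_assoc, I_mul_I]
    simpa using Real.pi_pos
  have hgauss := integrable_cexp_quadratic_slantedLine hre 0 0 c
  simp only [zero_mul, add_zero] at hgauss
  refine hgauss.mul_bdd (c := C / 2) (g := fun t => (2 * I * sin (π * slantedLine c (π / 4) t))⁻¹)
    (Continuous.aestronglyMeasurable (by fun_prop (disch := simp [hne]))) (.of_forall fun t => ?_)
  rw [norm_inv, norm_mul, norm_mul, norm_I, mul_one, Complex.norm_ofNat]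
  have hpos := norm_pos_iff.2 (hne t)
  rw [inv_le_iff_one_le_mul₀ (by positivity)]
  have hone : 1 ≤ Real.exp (π * |(slantedLine c (π / 4) t).im|) := Real.one_le_exp (by positivity)
  linarith [hC t]

lemma exists_norm_inv_exp_neg_add_one_le {θ : ℝ} (hc : ∀ n : ℤ, c + 1 / 2 ≠ n)
    (hθ : Real.sin θ ≠ 0) : ∃ C, ∀ x, ‖(exp (-(2 * π * I * slantedLine c θ x)) + 1)⁻¹‖ ≤
      C * ‖exp (2 * π * I * slantedLine c θ x)‖ := by
  obtain ⟨C, hC⟩ := exists_exp_le_mul_norm_sin_slantedLine hc hθ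
  refine ⟨C / 2, fun x => ?_⟩
  have hpos := norm_pos_iff.2 (sin_pi_mul_slantedLine_ne_zero hc hθ x)
  have hCx := hC x
  rw [slantedLine_im, ← slantedLine_im c] at hCx
  rw [← slantedLine_add_ofReal] at hpos hCx
  set z := slantedLine c θ x
  have hone : 1 = ‖exp (2 * π * I * z)‖ * ‖exp (-(π * I * z))‖ * Real.exp (π * z.im) := by
    simp only [norm_exp, ← Real.exp_add]
    rw [eq_comm, Real.exp_eq_one_iff]
    simp only [neg_re, mul_re, mul_im, re_ofNat, im_ofNat, ofReal_re, ofReal_im, I_re, I_im]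
    ring
  rw [exp_neg_add_one_eq_sin, norm_inv, norm_mul, norm_mul, Complex.norm_ofNat,
    inv_le_iff_one_le_mul₀ (mul_pos (mul_pos two_pos (norm_pos_iff.2 (exp_ne_zero _))) hpos)]
  have hexp : Real.exp (π * z.im) ≤ C * ‖sin (π * (z + (1 / 2 : ℝ)))‖ :=
    le_trans (by gcongr; exact le_abs_self _) hCx
  exact hone.trans_le ((mul_le_mul_of_nonneg_left hexp (by positivity)).trans_eq (by ring))

lemma integrable_exp_div_sin_mul_cpow_mul_exp_neg (hs : 0 < s.re) (hc₀ : 0 < c)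
    (hc : ∀ n : ℤ, c ≠ n) :
    Integrable (fun p : ℝ × ℝ => exp (π * I * slantedLine c (π / 4) p.1 ^ 2) /
        (2 * I * sin (π * slantedLine c (π / 4) p.1)) *
        ((p.2 : ℂ) ^ (s - 1) * exp (-(parabolicScale * slantedLine c (π / 4) p.1 * p.2))))
      (volume.prod (volume.restrict (Ioi 0))) := by
  have hdom := (integrable_exp_div_sin_slantedLine hc).mul_prod
    (integrableOn_cpow_mul_exp_neg (r := c * parabolicScale) hs
      (by rw [re_ofReal_mul]; exact mul_pos hc₀ parabolicScale_re_pos))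
  refine hdom.mono (Measurable.aestronglyMeasurable (by fun_prop)) ?_
  have hpos : ∀ᵐ p : ℝ × ℝ ∂volume.prod (volume.restrict (Ioi 0)), 0 < p.2 :=
    Measure.quasiMeasurePreserving_snd.ae (ae_restrict_mem measurableSet_Ioi)
  filter_upwards [hpos] with p hp
  rw [norm_mul, norm_mul (_ / _), norm_cpow_mul_exp_neg hp, norm_cpow_mul_exp_neg hp, re_ofReal_mul,
    parabolicScale_mul_slantedLine_re]

lemma integrable_exp_div_exp_neg_add_one_mul_cpow (hs : 0 < s.re) (hc : ∀ n : ℤ, c + 1 / 2 ≠ n) :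
    Integrable (fun p : ℝ × ℝ =>
        exp (-(π * I * (slantedLine c (-(π / 4)) p.1 + p.2 / parabolicScale) ^ 2)) /
          (exp (-(2 * π * I * slantedLine c (-(π / 4)) p.1)) + 1) * (p.2 : ℂ) ^ (s - 1))
      (volume.prod (volume.restrict (Ioi 0))) := by
  have hsin : Real.sin (-(π / 4)) ≠ 0 := by
    rw [Real.sin_neg]; exact neg_ne_zero.2 sin_pi_div_four_pos.ne'
  obtain ⟨C, hC⟩ := exists_norm_inv_exp_neg_add_one_le hc hsin
  have hgauss := integrable_cexp_quadratic_slantedLine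
    re_neg_pi_I_mul_exp_neg_pi_div_four_mul_I_sq_neg (2 * π * I) 0 c
  have hdom := (integrable_comp_add_mul_prod hgauss
    (integrableOn_cpow_mul_exp_neg hs parabolicScale_re_pos)
    (φ := fun w => w / √(2 * π)) (by fun_prop)).norm.const_mul C
  refine hdom.mono' (Measurable.aestronglyMeasurable (by fun_prop)) (.of_forall fun ⟨x, w⟩ => ?_)
  simp only
  rw [← slantedLine_add_div_parabolicScale]
  set z := slantedLine c (-(π / 4)) x with hz
  have hexp : exp (2 * π * I * z) = exp (2 * π * I * (z + w / parabolicScale)) *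
      exp (-(parabolicScale * w)) := by
    rw [← exp_add, ← parabolicScale_sq]
    congr 1
    field_simp [parabolicScale_ne_zero]
    ring
  rw [div_eq_mul_inv, norm_mul, norm_mul]
  refine (mul_le_mul_of_nonneg_right (mul_le_mul_of_nonneg_left (hC x) (norm_nonneg _))
    (norm_nonneg _)).trans_eq ?_
  rw [← hz, hexp, add_zero, exp_add]
  simp only [norm_mul, neg_mul]
  ring

end Fubini

section Representation

variable {c c' : ℝ} {s : ℂ}

lemma two_pi_I_mul_div_parabolicScale_mul (w u : ℂ) :
    2 * π * I * (w / parabolicScale) * u = parabolicScale * u * w := by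
  rw [← parabolicScale_sq]
  field_simp [parabolicScale_ne_zero]

lemma pi_I_mul_add_div_parabolicScale_sq (z w : ℂ) :
    π * I * (z + w / parabolicScale) ^ 2 =
      π * I * z ^ 2 + (w ^ 2 / 2 + parabolicScale * z * w) := by
  have hsq : (π * I : ℂ) = parabolicScale ^ 2 / 2 := by rw [parabolicScale_sq]; ring
  rw [hsq]
  field_simp [parabolicScale_ne_zero]
  ring

lemma lineInt_exp_mul_cpow_neg_div_sin (hs : 0 < s.re) (hc : 0 < c) (hc' : c < 1) :
    lineInt c (π / 4) (fun u => exp (π * I * u ^ 2) * u ^ (-s) / (2 * I * sin (π * u))) =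
      parabolicScale ^ s * (Gamma s)⁻¹ * ∫ w in Ioi (0 : ℝ), lineInt c (π / 4) (fun u =>
        exp (π * I * u ^ 2 - 2 * π * I * (w / parabolicScale) * u) / (2 * I * sin (π * u))) *
          (w : ℂ) ^ (s - 1) := by
  have hmellin (t : ℝ) : slantedLine c (π / 4) t ^ (-s) = parabolicScale ^ s * (Gamma s)⁻¹ *
      ∫ w in Ioi (0 : ℝ), (w : ℂ) ^ (s - 1) *
        exp (-(parabolicScale * slantedLine c (π / 4) t * w)) :=
    cpow_neg_eq_mul_integral hs parabolicScale_re_pos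
      (by rw [parabolicScale_mul_slantedLine_re]; exact mul_pos hc parabolicScale_re_pos)
  have hswap := lineInt_integral_swap
    (f := fun u (w : ℝ) => exp (π * I * u ^ 2) / (2 * I * sin (π * u)) *
      ((w : ℂ) ^ (s - 1) * exp (-(parabolicScale * u * w))))
    (integrable_exp_div_sin_mul_cpow_mul_exp_neg hs hc (ne_intCast_of_pos_of_lt_one hc hc'))
  simp only [integral_const_mul] at hswap
  simp only [two_pi_I_mul_div_parabolicScale_mul, ← lineInt_mul_const]
  trans parabolicScale ^ s * (Gamma s)⁻¹ * lineInt c (π / 4) fun u =>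
    exp (π * I * u ^ 2) / (2 * I * sin (π * u)) *
      ∫ w in Ioi (0 : ℝ), (w : ℂ) ^ (s - 1) * exp (-(parabolicScale * u * w))
  · rw [← lineInt_const_mul]
    exact lineInt_congr fun t => by rw [hmellin]; ring
  · rw [hswap]
    congr! 5
    rw [exp_sub, exp_neg]
    ring

lemma lineInt_mul_integral_exp_mul_cpow (hs : 0 < s.re) (hc : ∀ n : ℤ, c + 1 / 2 ≠ n) :
    lineInt c (-(π / 4)) (fun z => exp (-(π * I * z ^ 2)) / (exp (-(2 * π * I * z)) + 1) *
        ∫ w in Ioi (0 : ℝ), exp (-((w : ℂ) ^ 2 / 2) - parabolicScale * z * w) *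
          (w : ℂ) ^ (s - 1)) =
      ∫ w in Ioi (0 : ℝ), lineInt c (-(π / 4)) (fun z =>
        exp (-(π * I * (z + w / parabolicScale) ^ 2)) / (exp (-(2 * π * I * z)) + 1)) *
          (w : ℂ) ^ (s - 1) := by
  simp only [← lineInt_mul_const]
  rw [← lineInt_integral_swap (f := fun z (w : ℝ) =>
    exp (-(π * I * (z + w / parabolicScale) ^ 2)) / (exp (-(2 * π * I * z)) + 1) *
      (w : ℂ) ^ (s - 1)) (integrable_exp_div_exp_neg_add_one_mul_cpow hs hc)]
  refine lineInt_congr fun x => ?_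
  rw [← integral_const_mul]
  congr! 2
  rw [pi_I_mul_add_div_parabolicScale_sq, neg_add, exp_add, neg_add']
  ring

theorem riemann_siegel_parabolic_cylinder_general (s : ℂ) (hs : 0 < s.re) (c c' : ℝ)
    (hc : 0 < c) (hc' : c < 1) (hc₁ : -(1 / 2) < c') (hc₂ : c' < 1 / 2) :
    lineInt c (π / 4) (fun u =>
        exp (π * I * u ^ 2) * u ^ (-s) / (exp (π * I * u) - exp (-(π * I * u)))) =
      (2 * π) ^ (s / 2) * exp (π * I * (s + 1) / 4) * (Gamma s)⁻¹ *
        lineInt c' (-(π / 4)) (fun u =>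
          exp (-(π * I * u ^ 2)) / (exp (-(2 * π * I * u)) + 1) *
            ∫ w in Ioi (0 : ℝ),
              exp (-((w : ℂ) ^ 2 / 2) - √(2 * π) * exp (π * I / 4) * u * w) *
                (w : ℂ) ^ (s - 1)) := by
  have hc'_half (n : ℤ) : c' + 1 / 2 ≠ n :=
    ne_intCast_of_pos_of_lt_one (by linarith) (by linarith) n
  have hfactor : exp (π * I * (s + 1) / 4) = exp (π * I * s / 4) * exp ((π / 4 : ℝ) * I) := by
    rw [← exp_add]; push_cast; ring_nf
  simp only [exp_sub_exp_neg_eq_sin]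
  rw [← parabolicScale, lineInt_exp_mul_cpow_neg_div_sin hs hc hc',
    lineInt_mul_integral_exp_mul_cpow hs hc'_half]
  simp only [lineInt_mordell _ hc hc' (abs_lt.2 ⟨hc₁, hc₂⟩)]
  simp only [mul_assoc (exp ((π / 4 : ℝ) * I)), integral_const_mul]
  rw [parabolicScale_cpow, hfactor]
  ring

end Representation

/-- The representation of `∫_{0↗1} e^{iπu²} u^{-s}/(e^{iπu} - e^{-iπu}) du` by an
integral over the line `-1/2 ↘ 1/2` whose kernel is the real integral representation
of the parabolic cylinder function `U(s - 1/2, √(2π) e^{iπ/4} u)`. -/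
theorem riemann_siegel_parabolic_cylinder (s : ℂ) (hs : 1 < s.re)
    (c c' : ℝ) (hc : 0 < c) (hc' : c < 1) (hc₁ : -(1/2) < c') (hc₂ : c' < 1/2) :
    lineInt c (π/4) (fun u =>
      Complex.exp ((π : ℂ) * Complex.I * u ^ 2) * u ^ (-s) /
        (Complex.exp ((π : ℂ) * Complex.I * u) - Complex.exp (-((π : ℂ) * Complex.I * u)))) =
    (2 * (π : ℂ)) ^ (s / 2) * Complex.exp ((π : ℂ) * Complex.I * (s + 1) / 4) *
      (Complex.Gamma s)⁻¹ *
      lineInt c' (-(π/4)) (fun u =>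
        Complex.exp (-((π : ℂ) * Complex.I * u ^ 2)) /
          (Complex.exp (-(2 * (π : ℂ) * Complex.I * u)) + 1) *
        ∫ w in Set.Ioi (0 : ℝ),
          Complex.exp (-((w : ℂ) ^ 2 / 2) -
              (Real.sqrt (2 * π) : ℂ) * Complex.exp ((π : ℂ) * Complex.I / 4) * u * (w : ℂ)) *
            (w : ℂ) ^ (s - 1)) := by
  exact riemann_siegel_parabolic_cylinder_general s (zero_lt_one.trans hs) c c' hc hc' hc₁ hc₂
end
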